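/- Fix s₂ = σ₂ + it₂ with σ₁ + σ₂ = 3/2 and s₂ not a singularity of ζ₂. Then ∫₂^T |ζ₂(σ₁ + it₁, s₂)|² dt₁ = |s₂ − 1|^{-2} T log T + O(T), where the path of integration avoids the singularities of ζ₂. -/

import Mathlib

open Complex Filter Asymptotics Real

/-- The singular set of the Euler double zeta function: `s₂ = 1` or
`s₁ + s₂ ∈ {2, 1, 0, -2, -4, -6, …}`. -/
def zeta2Sing (p : ℂ × ℂ) : Prop :=
  p.2 = 1 ∨ p.1 + p.2 = 2 ∨ p.1 + p.2 = 1 ∨ ∃ k : ℕ, p.1 + p.2 = -2 * (k : ℂ)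


/-- normSq of a finite sum as a double sum -/
lemma sum_normSq_expand (S : Finset ℕ) (f : ℕ → ℂ) :
    ((‖∑ n ∈ S, f n‖ ^ 2 : ℝ) : ℂ) = ∑ m ∈ S, ∑ n ∈ S, f m * (starRingEnd ℂ) (f n) := by
  rw [← Finset.sum_mul_sum, ← map_sum, Complex.mul_conj, Complex.normSq_eq_norm_sq]

lemma exp_mul_conj_exp (x y : ℝ) :
    cexp (x * I) * (starRingEnd ℂ) (cexp (y * I)) = cexp ((x - y : ℝ) * I) := by
  rw [← Complex.exp_conj, ← Complex.exp_add]
  congr 1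
  simp
  ring

lemma integral_exp_int (k : ℤ) (hk : k ≠ 0) :
    ∫ x in (0:ℝ)..(2 * π), cexp ((k * x : ℝ) * I) = 0 := by
  have h := integral_exp_mul_complex (a := 0) (b := 2 * π) (c := (k : ℂ) * I)
    (by simp [hk])
  have h2 : ∀ x : ℝ, cexp ((k * x : ℝ) * I) = cexp ((k : ℂ) * I * x) := by
    intro x; congr 1; push_cast; ring
  simp_rw [h2]
  rw [h]
  have : cexp ((k : ℂ) * I * ((2 * π : ℝ) : ℂ)) = 1 := by
    rw [Complex.exp_eq_one_iff]; exact ⟨k, by push_cast; ring⟩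
  rw [this]; simp

lemma integral_x_exp_int (k : ℤ) (hk : k ≠ 0) :
    ∫ x in (0:ℝ)..(2 * π), ((x - π : ℝ) : ℂ) * cexp ((k * x : ℝ) * I) = 2 * π / (I * k) := by
  have hk' : (k : ℂ) ≠ 0 := by exact_mod_cast hk
  have hd : ∀ x ∈ Set.uIcc (0:ℝ) (2 * π), HasDerivAt
      (fun x : ℝ => (((x - π : ℝ) : ℂ) / (I * k) + 1 / (k : ℂ) ^ 2) * cexp ((k * x : ℝ) * I))
      (((x - π : ℝ) : ℂ) * cexp ((k * x : ℝ) * I)) x := by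
    intro x _
    have h1 : HasDerivAt (fun x : ℝ => ((x - π : ℝ) : ℂ) / (I * k) + 1 / (k : ℂ) ^ 2)
        (1 / (I * k)) x := by
      have : HasDerivAt (fun x : ℝ => ((x - π : ℝ) : ℂ)) 1 x := by
        simpa using ((hasDerivAt_id x).sub_const π).ofReal_comp
      exact (this.div_const _).add_const _
    have h2 : HasDerivAt (fun x : ℝ => ((k * x : ℝ) : ℂ) * I) (k * I) x := by
      have : HasDerivAt (fun x : ℝ => ((k * x : ℝ) : ℂ)) k x := by
        simpa using ((hasDerivAt_id x).const_mul (k : ℝ)).ofReal_comp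
      exact this.mul_const _
    convert! h1.mul h2.cexp using 1
    field_simp
    simp
    ring_nf
    rw [Complex.I_sq]
    ring
  rw [intervalIntegral.integral_eq_sub_of_hasDerivAt hd]
  · have : cexp (((k * (2 * π) : ℝ) : ℂ) * I) = 1 := by
      rw [Complex.exp_eq_one_iff]; exact ⟨k, by push_cast; ring⟩
    rw [this]; simp
    field_simp
    ring
  · apply Continuous.intervalIntegrable
    fun_prop

lemma hilbert_ineq (S : Finset ℕ) (u : ℕ → ℂ) :
    ‖∑ m ∈ S, ∑ n ∈ S, if m = n then 0 else u m * (starRingEnd ℂ) (u n) / ((m : ℂ) - n)‖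
      ≤ π * ∑ n ∈ S, ‖u n‖ ^ 2 := by
  set Q : ℝ → ℂ := fun x => ∑ n ∈ S, u n * cexp ((n * x : ℝ) * I) with hQ
  have hQc : Continuous Q := by fun_prop
  have hexp : ∀ x : ℝ, ((‖Q x‖ ^ 2 : ℝ) : ℂ) = ∑ m ∈ S, ∑ n ∈ S,
      u m * (starRingEnd ℂ) (u n) * cexp (((((m : ℤ) - n : ℤ) : ℝ) * x : ℝ) * I) := by
    intro x
    rw [hQ, sum_normSq_expand]
    refine Finset.sum_congr rfl fun m _ => Finset.sum_congr rfl fun n _ => ?_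
    rw [map_mul, mul_mul_mul_comm, exp_mul_conj_exp]
    congr 3
    push_cast; ring
  have hsq : ∫ x in (0:ℝ)..(2 * π), ‖Q x‖ ^ 2 = 2 * π * ∑ n ∈ S, ‖u n‖ ^ 2 := by
    have : ((∫ x in (0:ℝ)..(2 * π), ‖Q x‖ ^ 2 : ℝ) : ℂ)
        = ((2 * π * ∑ n ∈ S, ‖u n‖ ^ 2 : ℝ) : ℂ) := by
      rw [← intervalIntegral.integral_ofReal]
      simp_rw [hexp]
      rw [intervalIntegral.integral_finsetSum]
      · push_cast
        rw [Finset.mul_sum]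
        refine Finset.sum_congr rfl fun m hm => ?_
        rw [intervalIntegral.integral_finsetSum]
        · rw [Finset.sum_eq_single_of_mem m hm]
          · simp [Complex.mul_conj, Complex.normSq_eq_norm_sq]
          · intro n _ hn
            rw [intervalIntegral.integral_const_mul]
            have h0 := integral_exp_int ((m : ℤ) - n) (by omega)
            push_cast at h0
            rw [h0]; simp
        · intro n _
          apply Continuous.intervalIntegrable; fun_prop
      · intro n _
        apply Continuous.intervalIntegrable; fun_prop
    exact_mod_cast this
  have hH : ∫ x in (0:ℝ)..(2 * π), ((x - π : ℝ) : ℂ) * ((‖Q x‖ ^ 2 : ℝ) : ℂ)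
      = 2 * π / I * ∑ m ∈ S, ∑ n ∈ S,
        if m = n then 0 else u m * (starRingEnd ℂ) (u n) / ((m : ℂ) - n) := by
    simp_rw [hexp, Finset.mul_sum]
    rw [intervalIntegral.integral_finsetSum]
    · refine Finset.sum_congr rfl fun m hm => ?_
      rw [intervalIntegral.integral_finsetSum]
      · refine Finset.sum_congr rfl fun n hn => ?_
        have e : ∀ x : ℝ, ((x - π : ℝ) : ℂ) * (u m * (starRingEnd ℂ) (u n)
            * cexp (((((m : ℤ) - n : ℤ) : ℝ) * x : ℝ) * I))
            = u m * (starRingEnd ℂ) (u n) * (((x - π : ℝ) : ℂ) *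
              cexp (((((m : ℤ) - n : ℤ) : ℝ) * x : ℝ) * I)) := by intro x; ring
        simp_rw [e]
        rw [intervalIntegral.integral_const_mul]
        split_ifs with h
        · subst h
          have : ∫ x in (0:ℝ)..(2 * π), ((x - π : ℝ) : ℂ) = 0 := by
            rw [intervalIntegral.integral_ofReal]
            rw [intervalIntegral.integral_sub (by simp) (by simp)]
            simp; ring
          simp at this ⊢
          right; exact this
        · rw [integral_x_exp_int _ (by omega)]
          have : (m : ℂ) - n ≠ 0 := by
            rw [sub_ne_zero]; exact_mod_cast h
          push_cast
          field_simp
      · intro n _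
        apply Continuous.intervalIntegrable; fun_prop
    · intro n _
      apply Continuous.intervalIntegrable; fun_prop
  have hb : ‖∫ x in (0:ℝ)..(2 * π), ((x - π : ℝ) : ℂ) * ((‖Q x‖ ^ 2 : ℝ) : ℂ)‖
      ≤ ∫ x in (0:ℝ)..(2 * π), π * ‖Q x‖ ^ 2 := by
    apply intervalIntegral.norm_integral_le_of_norm_le (by positivity)
    · refine Filter.Eventually.of_forall fun x hx => ?_
      rw [norm_mul, Complex.norm_real, Complex.norm_real, Real.norm_of_nonneg (by positivity : 0 ≤ ‖Q x‖ ^ 2)]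
      gcongr
      rw [Real.norm_eq_abs, abs_le]
      constructor <;> linarith [hx.1, hx.2]
    · apply Continuous.intervalIntegrable; fun_prop
  rw [hH, intervalIntegral.integral_const_mul, hsq, norm_mul] at hb
  have h2 : ‖2 * (π : ℂ) / I‖ = 2 * π := by
    simp [abs_of_pos pi_pos]
  rw [h2] at hb
  have : 0 < 2 * π := by positivity
  have h3 : π * (2 * π * ∑ n ∈ S, ‖u n‖ ^ 2) = 2 * π * (π * ∑ n ∈ S, ‖u n‖ ^ 2) := by ring
  rw [h3] at hb
  exact le_of_mul_le_mul_left hb this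

/-- kernel comparison -/
lemma log_kernel_aux (m n : ℕ) (hn : 1 ≤ n) (h : n < m) :
    |1 / (Real.log m - Real.log n) - √m * √n / ((m : ℝ) - n)| ≤ 1 / 2 := by
  have hn0 : (0:ℝ) < n := by exact_mod_cast hn
  have hm0 : (0:ℝ) < m := by exact_mod_cast (by omega : 0 < m)
  have hmn : (n:ℝ) < m := by exact_mod_cast h
  obtain ⟨x, hx, hx2⟩ : ∃ x : ℝ, 0 < x ∧ x ^ 2 = n := ⟨√n, by positivity, Real.sq_sqrt hn0.le⟩
  obtain ⟨y, hy, hy2⟩ : ∃ y : ℝ, 0 < y ∧ y ^ 2 = m := ⟨√m, by positivity, Real.sq_sqrt hm0.le⟩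
  rw [← hx2, ← hy2] at hmn ⊢
  have hxy : x < y := lt_of_pow_lt_pow_left₀ 2 hy.le hmn
  rw [Real.sqrt_sq hx.le, Real.sqrt_sq hy.le, Real.log_pow, Real.log_pow]
  have hl : Real.log y - Real.log x = Real.log (y / x) := by
    rw [Real.log_div hy.ne' hx.ne']
  have hq : 1 < y / x := by rw [one_lt_div hx]; exact hxy
  have h1 : Real.log (y / x) ≤ (y / x - (y / x)⁻¹) / 2 := by
    rw [← Real.sinh_log (by positivity)]
    exact Real.self_le_sinh_iff.2 (Real.log_nonneg hq.le)
  have h2 : 1 - (y / x)⁻¹ ≤ Real.log (y / x) := Real.one_sub_inv_le_log_of_pos (by positivity)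
  have hL : (2:ℕ) * Real.log y - (2:ℕ) * Real.log x = 2 * Real.log (y / x) := by
    rw [← hl]; push_cast; ring
  rw [hL]
  set L := Real.log (y / x)
  have h1' : 2 * L ≤ (y ^ 2 - x ^ 2) / (x * y) := by
    have : (y / x - (y / x)⁻¹) = (y ^ 2 - x ^ 2) / (x * y) := by field_simp
    linarith
  have h2' : (y - x) / y ≤ L := by
    have : 1 - (y / x)⁻¹ = (y - x) / y := by field_simp
    linarith
  have hyx : 0 < y - x := by linarith
  have hL0 : 0 < L := lt_of_lt_of_le (by positivity) h2'
  have hd : 0 < y ^ 2 - x ^ 2 := by linarith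
  have a1 : y * x / (y ^ 2 - x ^ 2) ≤ 1 / (2 * L) := by
    rw [div_le_div_iff₀ hd (by positivity)]
    rw [le_div_iff₀ (by positivity)] at h1'
    nlinarith
  have a2 : 1 / (2 * L) ≤ y / (2 * (y - x)) := by
    rw [div_le_iff₀ hy] at h2'
    rw [div_le_div_iff₀ (by positivity) (by positivity)]
    nlinarith
  have a3 : y / (2 * (y - x)) - y * x / (y ^ 2 - x ^ 2) = y / (2 * (y + x)) := by
    have : y ^ 2 - x ^ 2 = (y - x) * (y + x) := by ring
    rw [this]
    field_simp
    ring
  have a4 : y / (2 * (y + x)) ≤ 1 / 2 := by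
    rw [div_le_div_iff₀ (by positivity) (by positivity)]; linarith
  rw [abs_le]; constructor <;> linarith

lemma log_kernel (m n : ℕ) (hm : 1 ≤ m) (hn : 1 ≤ n) (h : m ≠ n) :
    |1 / (Real.log m - Real.log n) - √m * √n / ((m : ℝ) - n)| ≤ 1 / 2 := by
  rcases lt_or_gt_of_ne h with h | h
  · have := log_kernel_aux n m hm h
    rw [abs_sub_comm] at this
    convert this using 2
    rw [← neg_sub (Real.log n), ← neg_sub (n : ℝ) m, div_neg, div_neg]
    ring
  · exact log_kernel_aux m n hn h

lemma log_hilbert (S : Finset ℕ) (hS : ∀ n ∈ S, 1 ≤ n) (a : ℕ → ℂ) :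
    ‖∑ m ∈ S, ∑ n ∈ S, if m = n then 0 else
      a m * (starRingEnd ℂ) (a n) / ((Real.log m - Real.log n : ℝ) : ℂ)‖
      ≤ π * ∑ n ∈ S, n * ‖a n‖ ^ 2 + 1 / 2 * (∑ n ∈ S, ‖a n‖) ^ 2 := by
  have h1 := hilbert_ineq S (fun n => (√n : ℝ) * a n)
  have e1 : ∀ n : ℕ, ‖((√n : ℝ) : ℂ) * a n‖ ^ 2 = n * ‖a n‖ ^ 2 := by
    intro n
    rw [norm_mul, mul_pow, Complex.norm_real, Real.norm_of_nonneg (by positivity),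
      Real.sq_sqrt (by positivity)]
  simp_rw [e1] at h1
  have e2 : (∑ m ∈ S, ∑ n ∈ S, if m = n then 0 else
      a m * (starRingEnd ℂ) (a n) / ((Real.log m - Real.log n : ℝ) : ℂ))
      = (∑ m ∈ S, ∑ n ∈ S, if m = n then 0 else
        (((√m : ℝ) : ℂ) * a m) * (starRingEnd ℂ) (((√n : ℝ) : ℂ) * a n) / ((m : ℂ) - n))
      + ∑ m ∈ S, ∑ n ∈ S, if m = n then 0 else a m * (starRingEnd ℂ) (a n) *
        ((1 / (Real.log m - Real.log n) - √m * √n / ((m : ℝ) - n) : ℝ) : ℂ) := by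
    rw [← Finset.sum_add_distrib]
    refine Finset.sum_congr rfl fun m _ => ?_
    rw [← Finset.sum_add_distrib]
    refine Finset.sum_congr rfl fun n _ => ?_
    split_ifs with h
    · simp
    · push_cast
      simp only [map_mul, Complex.conj_ofReal]
      ring
  rw [e2]
  refine (norm_add_le _ _).trans (add_le_add h1 ?_)
  rw [sq, Finset.sum_mul_sum, Finset.mul_sum]
  refine (norm_sum_le _ _).trans (Finset.sum_le_sum fun m hm => ?_)
  rw [Finset.mul_sum]
  refine (norm_sum_le _ _).trans (Finset.sum_le_sum fun n hn => ?_)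
  split_ifs with h
  · simp; positivity
  · rw [norm_mul, norm_mul, Complex.norm_real, RCLike.norm_conj, Real.norm_eq_abs]
    have := log_kernel m n (hS m hm) (hS n hn) h
    calc ‖a m‖ * ‖a n‖ * _ ≤ ‖a m‖ * ‖a n‖ * (1 / 2) := by gcongr
      _ = _ := by ring

/-- The mean value theorem for Dirichlet polynomials. -/
lemma mean_value (S : Finset ℕ) (hS : ∀ n ∈ S, 1 ≤ n) (a : ℕ → ℂ) (A B : ℝ) :
    |(∫ t in A..B, ‖∑ n ∈ S, a n * cexp ((-(t * Real.log n) : ℝ) * I)‖ ^ 2)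
      - (B - A) * ∑ n ∈ S, ‖a n‖ ^ 2|
      ≤ 2 * π * ∑ n ∈ S, n * ‖a n‖ ^ 2 + (∑ n ∈ S, ‖a n‖) ^ 2 := by
  set W : ℝ → ℂ := fun t => ∑ m ∈ S, ∑ n ∈ S, if m = n then 0 else
      (a m * cexp ((-(t * Real.log m) : ℝ) * I)) *
      (starRingEnd ℂ) (a n * cexp ((-(t * Real.log n) : ℝ) * I)) /
        ((Real.log m - Real.log n : ℝ) : ℂ) with hW
  have hWb : ∀ t, ‖W t‖ ≤ π * ∑ n ∈ S, n * ‖a n‖ ^ 2 + 1 / 2 * (∑ n ∈ S, ‖a n‖) ^ 2 := by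
    intro t
    have := log_hilbert S hS (fun n => a n * cexp ((-(t * Real.log n) : ℝ) * I))
    simp only [norm_mul, Complex.norm_exp_ofReal_mul_I, mul_one] at this
    exact this
  have key : (((∫ t in A..B, ‖∑ n ∈ S, a n * cexp ((-(t * Real.log n) : ℝ) * I)‖ ^ 2)
      - (B - A) * ∑ n ∈ S, ‖a n‖ ^ 2 : ℝ) : ℂ) = I * (W B - W A) := by
    rw [Complex.ofReal_sub, ← intervalIntegral.integral_ofReal]
    have hexp : ∀ t : ℝ, ((‖∑ n ∈ S, a n * cexp ((-(t * Real.log n) : ℝ) * I)‖ ^ 2 : ℝ) : ℂ)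
        = ∑ m ∈ S, ∑ n ∈ S, a m * (starRingEnd ℂ) (a n)
          * cexp ((-((Real.log m - Real.log n : ℝ) : ℂ) * I) * t) := by
      intro t
      rw [sum_normSq_expand]
      refine Finset.sum_congr rfl fun m _ => Finset.sum_congr rfl fun n _ => ?_
      rw [map_mul, mul_mul_mul_comm, exp_mul_conj_exp]
      congr 2
      push_cast; ring
    simp_rw [hexp]
    rw [sub_eq_iff_eq_add, intervalIntegral.integral_finsetSum]
    · push_cast
      rw [hW]
      simp only []
      rw [← Finset.sum_sub_distrib, Finset.mul_sum, Finset.mul_sum, ← Finset.sum_add_distrib]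
      refine Finset.sum_congr rfl fun m hm => ?_
      rw [intervalIntegral.integral_finsetSum]
      · rw [← Finset.sum_sub_distrib, Finset.mul_sum]
        have hdiag : ((B : ℂ) - A) * (‖a m‖ : ℂ) ^ 2
            = ∑ n ∈ S, if m = n then ((B : ℂ) - A) * (‖a m‖ : ℂ) ^ 2 else 0 := by
          rw [Finset.sum_ite_eq]; simp [hm]
        rw [hdiag, ← Finset.sum_add_distrib]
        refine Finset.sum_congr rfl fun n hn => ?_
        rw [intervalIntegral.integral_const_mul]
        split_ifs with h
        · subst h
          simp [Complex.mul_conj, Complex.normSq_eq_norm_sq]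
          ring
        · have hne : Real.log m - Real.log n ≠ 0 := by
            rw [sub_ne_zero]
            intro h'
            apply h
            have := Real.log_injOn_pos (by simpa using Nat.pos_of_ne_zero (by have := hS m hm; omega))
              (by simpa using Nat.pos_of_ne_zero (by have := hS n hn; omega)) h'
            exact_mod_cast this
          have hne' : ((Real.log m - Real.log n : ℝ) : ℂ) ≠ 0 := by exact_mod_cast hne
          have hI := integral_exp_mul_complex (a := A) (b := B)
            (mul_ne_zero (neg_ne_zero.2 hne') I_ne_zero)
          push_cast at hI
          rw [hI]
          have e : ∀ t : ℝ, (a m * cexp ((-(t * Real.log m) : ℝ) * I)) *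
              (starRingEnd ℂ) (a n * cexp ((-(t * Real.log n) : ℝ) * I))
              = a m * (starRingEnd ℂ) (a n)
                * cexp ((-((Real.log m - Real.log n : ℝ) : ℂ) * I) * t) := by
            intro t
            rw [map_mul, mul_mul_mul_comm, exp_mul_conj_exp]
            congr 2
            push_cast; ring
          have eA := e A
          have eB := e B
          push_cast at eA eB hne' ⊢
          rw [eA, eB]
          field_simp
          ring_nf
          rw [Complex.I_sq]
          ring
      · intro n _
        apply Continuous.intervalIntegrable; fun_prop
    · intro n _
      apply Continuous.intervalIntegrable; fun_prop
  rw [← Real.norm_eq_abs, ← Complex.norm_real, key, norm_mul, Complex.norm_I, one_mul]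
  refine (norm_sub_le _ _).trans ?_
  linarith [hWb A, hWb B]

/-- a punctured half plane is preconnected -/
lemma preconn_halfplane (c x : ℝ) (hc : c < x) :
    IsPreconnected {s : ℂ | c < s.re ∧ s ≠ (x : ℂ)} := by
  have hA : IsPreconnected {s : ℂ | c < s.re ∧ 0 < s.im} :=
    ((convex_halfSpace_re_gt c).inter (convex_halfSpace_im_gt 0)).isPreconnected
  have hB : IsPreconnected {s : ℂ | c < s.re ∧ s.im < 0} :=
    ((convex_halfSpace_re_gt c).inter (convex_halfSpace_im_lt 0)).isPreconnected
  have hC : IsPreconnected {s : ℂ | c < s.re ∧ s.re < x} :=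
    ((convex_halfSpace_re_gt c).inter (convex_halfSpace_re_lt x)).isPreconnected
  have hD : IsPreconnected {s : ℂ | x < s.re} := (convex_halfSpace_re_gt x).isPreconnected
  obtain ⟨y, hy1, hy2⟩ := exists_between hc
  have h1 := hA.union (⟨y, 1⟩ : ℂ) (by simp [hy1]) (by simp [hy1, hy2]) hC
  have h2 := h1.union (⟨y, -1⟩ : ℂ) (by right; simp [hy1, hy2]) (by simp [hy1]) hB
  have h3 := h2.union (⟨x + 1, 1⟩ : ℂ) (by left; left; simp; linarith) (by simp) hD
  convert! h3 using 1
  ext s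
  simp only [Set.mem_ofPred_eq, Set.mem_union, ne_eq, Complex.ext_iff, ofReal_re, ofReal_im]
  constructor
  · rintro ⟨a, b⟩
    rcases lt_trichotomy s.im 0 with h | h | h
    · exact Or.inl (Or.inr ⟨a, h⟩)
    · rcases lt_trichotomy s.re x with h' | h' | h'
      · exact Or.inl (Or.inl (Or.inr ⟨a, h'⟩))
      · exact absurd ⟨h', h⟩ b
      · exact Or.inr h'
    · exact Or.inl (Or.inl (Or.inl ⟨a, h⟩))
  · rintro (((⟨a, b⟩ | ⟨a, b⟩) | ⟨a, b⟩) | a)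
    · exact ⟨a, fun h => b.ne' h.2⟩
    · exact ⟨a, fun h => b.ne h.1⟩
    · exact ⟨a, fun h => b.ne h.2⟩
    · exact ⟨by linarith, fun h => a.ne' h.1⟩

lemma isOpen_phalf (c : ℝ) (z : ℂ) : IsOpen {s : ℂ | c < s.re ∧ s ≠ z} :=
  (isOpen_lt continuous_const continuous_re).inter isOpen_ne

/-- remainder of zeta -/
noncomputable def zr (m : ℕ) (s : ℂ) : ℂ :=
  riemannZeta s - ∑ k ∈ Finset.range m, ((k : ℂ) + 1) ^ (-s) - (m : ℂ) ^ (1 - s) / (s - 1)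

noncomputable def zd (m : ℕ) (s : ℂ) : ℂ :=
  ((m : ℂ) + 1) ^ (-s) + (((m : ℂ) + 1) ^ (1 - s) - (m : ℂ) ^ (1 - s)) / (s - 1)

lemma zr_succ (m : ℕ) (s : ℂ) : zr (m + 1) s = zr m s - zd m s := by
  unfold zr zd
  rw [Finset.sum_range_succ]
  push_cast
  ring

lemma zr_sum (m M : ℕ) (h : m ≤ M) (s : ℂ) :
    zr m s = zr M s + ∑ k ∈ Finset.Ico m M, zd k s := by
  induction M, h using Nat.le_induction with
  | base => simp
  | succ k hk ih => rw [Finset.sum_Ico_succ_top hk, zr_succ, ih]; ring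

lemma hasDerivAt_cpow_real (c : ℂ) (x : ℝ) (hx : 0 < x) :
    HasDerivAt (fun y : ℝ => (y : ℂ) ^ c) (c * (x : ℂ) ^ (c - 1)) x := by
  have := ((hasDerivAt_id (x : ℂ)).cpow_const (c := c) (by simp [slitPlane, hx])).comp_ofReal
  simpa using this

lemma rpow_aux (m : ℕ) (hm : 1 ≤ m) (x p : ℝ) (h1 : (m : ℝ) ≤ x) (h2 : x ≤ m + 1) :
    x ^ p ≤ 2 ^ |p| * (m : ℝ) ^ p := by
  have hm0 : (1:ℝ) ≤ m := by exact_mod_cast hm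
  have hx : x = (x / m) * m := by field_simp
  have hy1 : 1 ≤ x / m := by rw [one_le_div (by linarith)]; exact h1
  have hy2 : x / m ≤ 2 := by rw [div_le_iff₀ (by linarith)]; linarith
  rw [hx, Real.mul_rpow (by positivity) (by positivity)]
  gcongr
  calc (x / m) ^ p ≤ (x / m) ^ |p| := Real.rpow_le_rpow_of_exponent_le hy1 (le_abs_self p)
    _ ≤ 2 ^ |p| := Real.rpow_le_rpow (by positivity) hy2 (abs_nonneg p)

lemma zd_bound (m : ℕ) (hm : 1 ≤ m) (s : ℂ) (hs : s ≠ 1) :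
    ‖zd m s‖ ≤ ‖s‖ * 2 ^ (|s.re| + 1) * (m : ℝ) ^ (-s.re - 1) := by
  have hm0 : (1:ℝ) ≤ m := by exact_mod_cast hm
  set C := ‖s‖ * 2 ^ (|s.re| + 1) * (m : ℝ) ^ (-s.re - 1) with hC
  have hconv : Convex ℝ (Set.Icc (m : ℝ) (m + 1)) := convex_Icc _ _
  have hs1 : s - 1 ≠ 0 := sub_ne_zero.2 hs
  have hb1 : ∀ x ∈ Set.Icc (m : ℝ) (m + 1),
      ‖(((m : ℝ) + 1 : ℝ) : ℂ) ^ (-s) - (x : ℂ) ^ (-s)‖ ≤ C := by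
    intro x hx
    have := Convex.norm_image_sub_le_of_norm_hasDerivWithin_le (C := C)
      (f := fun y : ℝ => (y : ℂ) ^ (-s)) (f' := fun y : ℝ => (-s) * (y : ℂ) ^ (-s - 1))
      (s := Set.Icc (m : ℝ) (m + 1)) (x := x) (y := m + 1)
      (fun y hy => (hasDerivAt_cpow_real (-s) y (by linarith [hy.1])).hasDerivWithinAt)
      (by
        intro y hy
        rw [norm_mul, norm_neg, Complex.norm_cpow_eq_rpow_re_of_pos (by linarith [hy.1]), hC,
          mul_assoc]
        gcongr
        have h := rpow_aux m hm y (-s.re - 1) hy.1 hy.2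
        have e : (-s - 1).re = -s.re - 1 := by simp
        rw [e]
        refine h.trans ?_
        gcongr
        · norm_num
        · have := abs_add_le (-s.re) (-1)
          rw [abs_neg, abs_neg, abs_one] at this
          exact this) hconv hx (by simp)
    refine this.trans ?_
    have h0 : ‖(m : ℝ) + 1 - x‖ ≤ 1 := by
      rw [Real.norm_eq_abs, abs_le]; constructor <;> linarith [hx.1, hx.2]
    have hC0 : 0 ≤ C := by positivity
    nlinarith
  have := Convex.norm_image_sub_le_of_norm_hasDerivWithin_le (C := C)
      (f := fun y : ℝ => (((m : ℝ) + 1 : ℝ) : ℂ) ^ (-s) * y + (y : ℂ) ^ (1 - s) / (s - 1))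
      (f' := fun y : ℝ => (((m : ℝ) + 1 : ℝ) : ℂ) ^ (-s) - (y : ℂ) ^ (-s))
      (s := Set.Icc (m : ℝ) (m + 1)) (x := m) (y := m + 1)
      (by
        intro y hy
        have a1 := (hasDerivAt_cpow_real (1 - s) y (by linarith [hy.1])).div_const (s - 1)
        have a2 : HasDerivAt (fun y : ℝ => (((m : ℝ) + 1 : ℝ) : ℂ) ^ (-s) * (y : ℂ))
            ((((m : ℝ) + 1 : ℝ) : ℂ) ^ (-s) * 1) y :=
          ((hasDerivAt_id (y : ℂ)).comp_ofReal).const_mul _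
        convert! (a2.add a1).hasDerivWithinAt using 1
        rw [show (1 - s - 1 : ℂ) = -s by ring]
        field_simp
        ring) hb1 hconv (by simp) (by simp)
  have e : zd m s = ((((m : ℝ) + 1 : ℝ) : ℂ) ^ (-s) * (((m : ℝ) + 1 : ℝ) : ℂ)
      + (((m : ℝ) + 1 : ℝ) : ℂ) ^ (1 - s) / (s - 1))
      - ((((m : ℝ) + 1 : ℝ) : ℂ) ^ (-s) * ((m : ℝ) : ℂ) + ((m : ℝ) : ℂ) ^ (1 - s) / (s - 1)) := by
    unfold zd
    push_cast
    ring
  rw [e]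
  refine this.trans ?_
  simp

lemma zr_differentiableAt (m : ℕ) (hm : 1 ≤ m) (s : ℂ) (hs : s ≠ 1) :
    DifferentiableAt ℂ (zr m) s := by
  unfold zr
  have hs1 : s - 1 ≠ 0 := sub_ne_zero.2 hs
  have hm' : (m : ℂ) ≠ 0 := by exact_mod_cast (by omega : m ≠ 0)
  refine ((differentiableAt_riemannZeta hs).sub ?_).sub ?_
  · refine DifferentiableAt.fun_sum fun k _ => ?_
    exact DifferentiableAt.const_cpow (by fun_prop) (Or.inl (by exact_mod_cast (by omega : k + 1 ≠ 0)))
  · exact (DifferentiableAt.const_cpow (by fun_prop) (Or.inl hm')).div (by fun_prop) hs1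

lemma zd_differentiableAt (m : ℕ) (hm : 1 ≤ m) (s : ℂ) (hs : s ≠ 1) :
    DifferentiableAt ℂ (zd m) s := by
  have : zd m = fun s => zr m s - zr (m + 1) s := by
    ext s; rw [zr_succ]; ring
  rw [this]
  exact (zr_differentiableAt m hm s hs).sub (zr_differentiableAt _ (by omega) s hs)

lemma zd_tsum_diff : DifferentiableOn ℂ (fun s => ∑' k : ℕ, zd (k + 1) s)
    {s : ℂ | 0 < s.re ∧ s ≠ ((1:ℝ) : ℂ)} := by
  intro s₀ hs₀
  obtain ⟨h0, h1⟩ := hs₀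
  set R := ‖s₀‖ + 1 with hR
  set U : Set ℂ := {s : ℂ | s₀.re / 2 < s.re ∧ s ≠ ((1:ℝ) : ℂ)} ∩ Metric.ball s₀ 1 with hU
  have hUo : IsOpen U := (isOpen_phalf _ _).inter Metric.isOpen_ball
  have hmem : s₀ ∈ U := ⟨⟨by linarith, h1⟩, by simp⟩
  have hd := Complex.differentiableOn_tsum_of_summable_norm (U := U)
    (F := fun (k : ℕ) s => zd (k + 1) s)
    (u := fun k : ℕ => R * 2 ^ (R + 1) * ((k + 1 : ℕ) : ℝ) ^ (-(s₀.re / 2) - 1))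
    (by
      apply Summable.mul_left
      exact (summable_nat_add_iff 1).2 (Real.summable_nat_rpow.2 (by linarith)))
    (fun k s hs => (zd_differentiableAt _ (by omega) s
      (by simpa using hs.1.2)).differentiableWithinAt) hUo
    (by
      intro k s hs
      refine (zd_bound (k + 1) (by omega) s (by simpa using hs.1.2)).trans ?_
      have hn : ‖s‖ ≤ R := by
        have h2 : ‖s - s₀‖ < 1 := by simpa [dist_eq_norm] using hs.2
        have := norm_le_norm_add_norm_sub' s s₀
        linarith
      have hre : |s.re| ≤ R := (Complex.abs_re_le_norm s).trans hn
      gcongr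
      · norm_num
      · exact_mod_cast (by omega : 1 ≤ k + 1)
      · exact hs.1.1.le)
  exact (hd.differentiableAt (hUo.mem_nhds hmem)).differentiableWithinAt

lemma zd_summable (s : ℂ) (h0 : 0 < s.re) (h1 : s ≠ 1) : Summable (fun k : ℕ => zd (k + 1) s) := by
  refine Summable.of_norm_bounded
    (g := fun k : ℕ => ‖s‖ * 2 ^ (|s.re| + 1) * ((k + 1 : ℕ) : ℝ) ^ (-s.re - 1)) ?_
    (fun k => zd_bound (k + 1) (by omega) s h1)
  apply Summable.mul_left
  exact (summable_nat_add_iff 1).2 (Real.summable_nat_rpow.2 (by linarith))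

lemma zr_tendsto_aux (s : ℂ) (h0 : 0 < s.re) (h1 : s ≠ 1) :
    Tendsto (fun m : ℕ => zr m s) atTop (nhds (zr 1 s - ∑' k : ℕ, zd (k + 1) s)) := by
  rw [← tendsto_add_atTop_iff_nat 1]
  have h := ((zd_summable s h0 h1).hasSum.tendsto_sum_nat).const_sub (zr 1 s)
  refine h.congr fun n => ?_
  have := zr_sum 1 (n + 1) (by omega) s
  rw [this, Finset.sum_Ico_eq_sum_range]
  simp [add_comm]

lemma zr_tendsto_of_one_lt (s : ℂ) (h1 : 1 < s.re) :
    Tendsto (fun m : ℕ => zr m s) atTop (nhds 0) := by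
  unfold zr
  have hs : Summable (fun k : ℕ => ((k : ℂ) + 1) ^ (-s)) := by
    have := (summable_nat_add_iff 1).2 (Complex.summable_one_div_nat_cpow.2 h1)
    refine this.congr fun k => ?_
    rw [Complex.cpow_neg]; push_cast; rw [one_div]
  have hz : riemannZeta s = ∑' k : ℕ, ((k : ℂ) + 1) ^ (-s) := by
    rw [zeta_eq_tsum_one_div_nat_add_one_cpow h1]
    refine tsum_congr fun k => ?_
    rw [Complex.cpow_neg, one_div]
  have h2 := (hs.hasSum.tendsto_sum_nat).const_sub (riemannZeta s)
  rw [← hz, sub_self] at h2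
  have h3 : Tendsto (fun m : ℕ => (m : ℂ) ^ (1 - s) / (s - 1)) atTop (nhds 0) := by
    have : Tendsto (fun m : ℕ => (m : ℂ) ^ (1 - s)) atTop (nhds 0) := by
      rw [tendsto_zero_iff_norm_tendsto_zero]
      have h4 := (tendsto_rpow_neg_atTop (y := s.re - 1) (by linarith)).comp
        tendsto_natCast_atTop_atTop
      refine h4.congr' ?_
      filter_upwards [eventually_gt_atTop 0] with m hm
      rw [Complex.norm_natCast_cpow_of_pos hm]
      simp
    simpa using this.div_const (s - 1)
  simpa using h2.sub h3

lemma zr_tendsto (s : ℂ) (h0 : 0 < s.re) (h1 : s ≠ 1) :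
    Tendsto (fun m : ℕ => zr m s) atTop (nhds 0) := by
  have hU := isOpen_phalf 0 ((1:ℝ) : ℂ)
  have hf : AnalyticOnNhd ℂ (zr 1) {s : ℂ | 0 < s.re ∧ s ≠ ((1:ℝ) : ℂ)} :=
    DifferentiableOn.analyticOnNhd (fun s hs => (zr_differentiableAt 1 le_rfl s
      (by simpa using hs.2)).differentiableWithinAt) hU
  have hg := zd_tsum_diff.analyticOnNhd hU
  have heq := hf.eqOn_of_preconnected_of_eventuallyEq hg (preconn_halfplane 0 1 one_pos)
    (z₀ := 2) (by simp) (by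
      have : {s : ℂ | 1 < s.re} ∈ nhds (2:ℂ) :=
        (isOpen_lt continuous_const continuous_re).mem_nhds (by simp)
      filter_upwards [this] with s hs
      have hs' : 1 < s.re := hs
      have hs1 : s ≠ 1 := by rintro rfl; simp at hs'
      have a1 := zr_tendsto_of_one_lt s hs'
      have a2 := zr_tendsto_aux s (by linarith) hs1
      exact sub_eq_zero.1 (tendsto_nhds_unique a2 a1))
  have h2 := zr_tendsto_aux s h0 h1
  rwa [heq (show s ∈ _ from ⟨h0, by simpa using h1⟩), sub_self] at h2

noncomputable def C8 : ℝ := ∑' n : ℕ, (n : ℝ) ^ (-(9/8) : ℝ)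

lemma C8_sum (S : Finset ℕ) : ∑ n ∈ S, (n : ℝ) ^ (-(9/8) : ℝ) ≤ C8 :=
  Summable.sum_le_tsum S (fun i _ => by positivity) (Real.summable_nat_rpow.2 (by norm_num))

lemma C8_nonneg : 0 ≤ C8 := tsum_nonneg fun i => by positivity

noncomputable def zK (s : ℂ) : ℝ := ‖zr 1 s‖ + ‖s‖ * 2 ^ (|s.re| + 1) * C8

lemma zK_nonneg (s : ℂ) : 0 ≤ zK s := by
  have := C8_nonneg
  unfold zK; positivity

lemma zK_continuousAt (s : ℂ) (hs : s ≠ 1) : ContinuousAt zK s := by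
  unfold zK
  have h1 := (zr_differentiableAt 1 le_rfl s hs).continuousAt
  refine h1.norm.add (ContinuousAt.mul ?_ continuousAt_const)
  apply Continuous.continuousAt
  refine continuous_norm.mul ?_
  exact Continuous.rpow continuous_const (by fun_prop) (fun x => Or.inl (by norm_num))

lemma zr_bound (m : ℕ) (hm : 1 ≤ m) (s : ℂ) (hs : s ≠ 1) :
    ‖zr m s‖ ≤ zK s * (m : ℝ) ^ (1 / 8 - s.re) := by
  have hm0 : (1:ℝ) ≤ m := by exact_mod_cast hm
  have hC8 := C8_nonneg
  have hsplit : ∀ k : ℕ, 1 ≤ k → (k : ℝ) ^ (-s.re - 1)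
      = (k : ℝ) ^ (1 / 8 - s.re) * (k : ℝ) ^ (-(9/8) : ℝ) := by
    intro k hk
    rw [← Real.rpow_add (by exact_mod_cast hk)]
    congr 1; ring
  set K := ‖s‖ * 2 ^ (|s.re| + 1) with hK
  have hK0 : 0 ≤ K := by positivity
  -- general block bound
  have block : ∀ a b : ℕ, 1 ≤ a →
      (∀ k ∈ Finset.Ico a b, (k : ℝ) ^ (1 / 8 - s.re) ≤ (m : ℝ) ^ (1 / 8 - s.re)) →
      ‖∑ k ∈ Finset.Ico a b, zd k s‖ ≤ K * C8 * (m : ℝ) ^ (1 / 8 - s.re) := by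
    intro a b ha hmono
    calc ‖∑ k ∈ Finset.Ico a b, zd k s‖
        ≤ ∑ k ∈ Finset.Ico a b, K * (m : ℝ) ^ (1 / 8 - s.re) * (k : ℝ) ^ (-(9/8) : ℝ) := by
          refine (norm_sum_le _ _).trans (Finset.sum_le_sum fun k hk => ?_)
          have hk1 : 1 ≤ k := ha.trans (Finset.mem_Ico.1 hk).1
          refine (zd_bound k hk1 s hs).trans ?_
          rw [hsplit k hk1, ← mul_assoc]
          exact mul_le_mul_of_nonneg_right (mul_le_mul_of_nonneg_left (hmono k hk) hK0)
            (by positivity)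
      _ = K * (m : ℝ) ^ (1 / 8 - s.re) * ∑ k ∈ Finset.Ico a b, (k : ℝ) ^ (-(9/8) : ℝ) := by
          rw [Finset.mul_sum]
      _ ≤ K * (m : ℝ) ^ (1 / 8 - s.re) * C8 := by
          gcongr
          exact C8_sum _
      _ = _ := by ring
  rcases le_total s.re (1 / 8) with h | h
  · have h1 := zr_sum 1 m hm s
    have h2 : zr m s = zr 1 s - ∑ k ∈ Finset.Ico 1 m, zd k s := by rw [h1]; ring
    rw [h2]
    refine (norm_sub_le _ _).trans ?_
    have h3 := block 1 m le_rfl (by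
      intro k hk
      have hk2 := Finset.mem_Ico.1 hk
      apply Real.rpow_le_rpow (by positivity) (by exact_mod_cast hk2.2.le) (by linarith))
    have h4 : 1 ≤ (m : ℝ) ^ (1 / 8 - s.re) := Real.one_le_rpow hm0 (by linarith)
    unfold zK
    rw [← hK]
    nlinarith [norm_nonneg (zr 1 s)]
  · have ht := (zr_tendsto s (by linarith) hs).norm
    rw [norm_zero] at ht
    have ht2 := ht.add_const (K * C8 * (m : ℝ) ^ (1 / 8 - s.re))
    rw [zero_add] at ht2
    have h5 : ‖zr m s‖ ≤ K * C8 * (m : ℝ) ^ (1 / 8 - s.re) := by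
      refine ge_of_tendsto ht2 ?_
      filter_upwards [eventually_ge_atTop m] with M hM
      rw [zr_sum m M hM s]
      refine (norm_add_le _ _).trans (add_le_add le_rfl ?_)
      refine block m M hm ?_
      intro k hk
      have hk2 := Finset.mem_Ico.1 hk
      exact Real.rpow_le_rpow_of_nonpos (by linarith) (by exact_mod_cast hk2.1) (by linarith)
    refine h5.trans ?_
    unfold zK
    rw [← hK]
    gcongr
    linarith [norm_nonneg (zr 1 s)]

lemma not_sing {s₁ s₂ : ℂ} (h1 : s₂ ≠ 1) (h2 : 5 / 4 < (s₁ + s₂).re) (h3 : s₁ + s₂ ≠ 2) :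
    ¬ zeta2Sing (s₁, s₂) := by
  rintro (h | h | h | ⟨k, h⟩)
  · exact h1 h
  · exact h3 h
  · simp only at h
    rw [h] at h2; norm_num at h2
  · simp only at h
    rw [h] at h2
    have : (-2 * (k : ℂ)).re = -2 * (k : ℝ) := by simp
    rw [this] at h2
    have : (0:ℝ) ≤ k := by positivity
    linarith

noncomputable def zterm (m : ℕ) (s s₂ : ℂ) : ℂ := ((m : ℂ) + 1) ^ (-(s - s₂)) * zr (m + 1) s₂

lemma zterm_bound (m : ℕ) (s s₂ : ℂ) (h : s₂ ≠ 1) :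
    ‖zterm m s s₂‖ ≤ zK s₂ * ((m + 1 : ℕ) : ℝ) ^ (1 / 8 - s.re) := by
  unfold zterm
  have e : ((m : ℂ) + 1) = ((m + 1 : ℕ) : ℂ) := by push_cast; ring
  rw [norm_mul, e, Complex.norm_natCast_cpow_of_pos (by omega)]
  have hb := zr_bound (m + 1) (by omega) s₂ h
  have hp : (0:ℝ) < ((m + 1 : ℕ) : ℝ) := by exact_mod_cast (by omega : 0 < m + 1)
  calc _ ≤ ((m + 1 : ℕ) : ℝ) ^ (-(s - s₂)).re * (zK s₂ * ((m + 1 : ℕ) : ℝ) ^ (1 / 8 - s₂.re)) := by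
        gcongr
    _ = zK s₂ * (((m + 1 : ℕ) : ℝ) ^ (-(s - s₂)).re * ((m + 1 : ℕ) : ℝ) ^ (1 / 8 - s₂.re)) := by ring
    _ = _ := by
        rw [← Real.rpow_add hp]
        congr 2
        simp

lemma zterm_bound' (m : ℕ) (s s₂ : ℂ) (h : s₂ ≠ 1) (hs : 5 / 4 < s.re) :
    ‖zterm m s s₂‖ ≤ zK s₂ * ((m + 1 : ℕ) : ℝ) ^ (-(9 / 8) : ℝ) := by
  refine (zterm_bound m s s₂ h).trans ?_
  have := zK_nonneg s₂
  gcongr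
  · exact_mod_cast (by omega : 1 ≤ m + 1)
  · linarith

lemma summable_98 : Summable (fun m : ℕ => ((m + 1 : ℕ) : ℝ) ^ (-(9 / 8) : ℝ)) :=
  (summable_nat_add_iff 1).2 (Real.summable_nat_rpow.2 (by norm_num))

lemma zterm_summable (s s₂ : ℂ) (h : s₂ ≠ 1) (hs : 5 / 4 < s.re) :
    Summable (fun m => zterm m s s₂) :=
  Summable.of_norm_bounded (summable_98.mul_left (zK s₂)) (fun m => zterm_bound' m s s₂ h hs)

noncomputable def zH (s s₂ : ℂ) : ℂ :=
  riemannZeta (s - 1) / (s₂ - 1) + ∑' m : ℕ, zterm m s s₂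

lemma cast_succ_ne (m : ℕ) : ((m : ℂ) + 1) ≠ 0 := by exact_mod_cast (by omega : m + 1 ≠ 0)

lemma zH_diff_s (s₂ : ℂ) (h : s₂ ≠ 1) :
    DifferentiableOn ℂ (fun s => zH s s₂) {s : ℂ | 5 / 4 < s.re ∧ s ≠ ((2:ℝ) : ℂ)} := by
  unfold zH
  refine DifferentiableOn.add ?_ ?_
  · intro s hs
    have hs2 : s - 1 ≠ 1 := by
      intro h'
      apply hs.2
      have : s = 2 := by linear_combination h'
      simpa using this
    have := (differentiableAt_riemannZeta hs2).comp s (f := fun s : ℂ => s - 1) (by fun_prop)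
    exact (this.div_const _).differentiableWithinAt
  · refine Complex.differentiableOn_tsum_of_summable_norm (summable_98.mul_left (zK s₂)) ?_
      (isOpen_phalf _ _) (fun m s hs => zterm_bound' m s s₂ h hs.1)
    intro m s hs
    unfold zterm
    refine (DifferentiableAt.mul_const ?_ _).differentiableWithinAt
    exact DifferentiableAt.const_cpow (by fun_prop) (Or.inl (cast_succ_ne m))

lemma zH_diff_s₂ (s : ℂ) (hs : 5 / 4 < s.re) :
    DifferentiableOn ℂ (fun s₂ => zH s s₂) {(1:ℂ)}ᶜ := by
  unfold zH
  refine DifferentiableOn.add ?_ ?_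
  · intro s₂ h
    have h1 : s₂ - 1 ≠ 0 := sub_ne_zero.2 h
    have hd : DifferentiableAt ℂ (fun w : ℂ => riemannZeta (s - 1) / (w - 1)) s₂ :=
      (differentiableAt_const _).div (by fun_prop) h1
    exact hd.differentiableWithinAt
  · intro s₂ h
    have hc := zK_continuousAt s₂ h
    have hev : ∀ᶠ w in nhds s₂, zK w < zK s₂ + 1 ∧ w ≠ 1 :=
      (hc.eventually_lt_const (by linarith)).and (isOpen_ne.mem_nhds h)
    obtain ⟨U, hU1, hU2, hU3⟩ := eventually_nhds_iff.1 hev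
    have hd := Complex.differentiableOn_tsum_of_summable_norm (U := U)
      (F := fun m s₂ => zterm m s s₂)
      (summable_98.mul_left (zK s₂ + 1)) (by
        intro m w hw
        unfold zterm
        refine (DifferentiableAt.mul ?_ ?_).differentiableWithinAt
        · exact DifferentiableAt.const_cpow (by fun_prop) (Or.inl (cast_succ_ne m))
        · exact zr_differentiableAt _ (by omega) w (hU1 w hw).2) hU2 (by
        intro m w hw
        refine (zterm_bound' m s w (hU1 w hw).2 hs).trans ?_
        gcongr
        exact (hU1 w hw).1.le)
    exact (hd.differentiableAt (hU2.mem_nhds hU3)).differentiableWithinAt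

lemma inner_tsum (m : ℕ) (s₂ : ℂ) (h : 1 < s₂.re) :
    ∑' n : ℕ, (((m : ℂ) + 1) + ((n : ℂ) + 1)) ^ (-s₂)
      = zr (m + 1) s₂ + ((m : ℂ) + 1) ^ (1 - s₂) / (s₂ - 1) := by
  have hs : Summable (fun k : ℕ => ((k : ℂ) + 1) ^ (-s₂)) := by
    have := (summable_nat_add_iff 1).2 (Complex.summable_one_div_nat_cpow.2 h)
    refine this.congr fun k => ?_
    rw [Complex.cpow_neg]; push_cast; rw [one_div]
  have hz : riemannZeta s₂ = ∑' k : ℕ, ((k : ℂ) + 1) ^ (-s₂) := by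
    rw [zeta_eq_tsum_one_div_nat_add_one_cpow h]
    refine tsum_congr fun k => ?_
    rw [Complex.cpow_neg, one_div]
  have h1 := hs.sum_add_tsum_nat_add (m + 1)
  rw [← hz] at h1
  unfold zr
  rw [← h1]
  push_cast
  have : ∀ n : ℕ, (((m : ℂ) + 1) + ((n : ℂ) + 1)) = (n : ℂ) + (m + 1) + 1 := by intro n; ring
  simp_rw [this]
  ring

lemma Z_eq0 (Z : ℂ → ℂ → ℂ)
    (hZs : ∀ s₁ s₂ : ℂ, 1 < s₂.re → 2 < s₁.re + s₂.re →
      Z s₁ s₂ = ∑' m : ℕ, ((m : ℂ) + 1) ^ (-s₁)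
        * ∑' n : ℕ, (((m : ℂ) + 1) + ((n : ℂ) + 1)) ^ (-s₂))
    (s s₂ : ℂ) (h2 : 1 < s₂.re) (hs : 2 < s.re) : Z (s - s₂) s₂ = zH s s₂ := by
  have h21 : s₂ ≠ 1 := by rintro rfl; simp at h2
  rw [hZs (s - s₂) s₂ h2 (by simpa using hs)]
  unfold zH
  have hs' : 1 < (s - 1).re := by simp; linarith
  have hz : riemannZeta (s - 1) = ∑' k : ℕ, ((k : ℂ) + 1) ^ (-(s - 1)) := by
    rw [zeta_eq_tsum_one_div_nat_add_one_cpow hs']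
    refine tsum_congr fun k => ?_
    rw [Complex.cpow_neg, one_div]
  have hsum : Summable (fun k : ℕ => ((k : ℂ) + 1) ^ (-(s - 1))) := by
    have := (summable_nat_add_iff 1).2 (Complex.summable_one_div_nat_cpow.2 hs')
    refine this.congr fun k => ?_
    rw [Complex.cpow_neg]; push_cast; rw [one_div]
  rw [hz, ← tsum_div_const, ← (hsum.div_const _).tsum_add (zterm_summable s s₂ h21 (by linarith))]
  refine tsum_congr fun m => ?_
  rw [inner_tsum m s₂ h2, zterm, mul_add, add_comm]
  congr 1
  rw [mul_div_assoc', ← Complex.cpow_add _ _ (cast_succ_ne m)]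
  congr 2
  ring

lemma Z_eq (Z : ℂ → ℂ → ℂ)
    (hZa : AnalyticOnNhd ℂ (fun p : ℂ × ℂ => Z p.1 p.2) {p | ¬ zeta2Sing p})
    (hZs : ∀ s₁ s₂ : ℂ, 1 < s₂.re → 2 < s₁.re + s₂.re →
      Z s₁ s₂ = ∑' m : ℕ, ((m : ℂ) + 1) ^ (-s₁)
        * ∑' n : ℕ, (((m : ℂ) + 1) + ((n : ℂ) + 1)) ^ (-s₂))
    (s s₂ : ℂ) (h2 : s₂ ≠ 1) (hs : 5 / 4 < s.re) (hs2 : s ≠ 2) :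
    Z (s - s₂) s₂ = zH s s₂ := by
  have hZd : ∀ s s₂ : ℂ, s₂ ≠ 1 → 5 / 4 < s.re → s ≠ 2 →
      DifferentiableAt ℂ (fun p : ℂ × ℂ => Z p.1 p.2) (s - s₂, s₂) := by
    intro s s₂ h1 h2 h3
    exact (hZa (s - s₂, s₂) (not_sing h1 (by simpa using h2) (by simpa using h3))).differentiableAt
  -- step 1
  have step1 : ∀ w : ℂ, 1 < w.re → Z (s - w) w = zH s w := by
    intro w hw
    have hw1 : w ≠ 1 := by rintro rfl; simp at hw
    have hf : AnalyticOnNhd ℂ (fun s => Z (s - w) w) {s : ℂ | 5 / 4 < s.re ∧ s ≠ ((2:ℝ) : ℂ)} := by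
      refine DifferentiableOn.analyticOnNhd (fun s hs => ?_) (isOpen_phalf _ _)
      exact (((hZd s w hw1 hs.1 (by simpa using hs.2))).comp s
        (f := fun s : ℂ => (s - w, w)) (by fun_prop)).differentiableWithinAt
    have hg := (zH_diff_s w hw1).analyticOnNhd (isOpen_phalf _ _)
    have := hf.eqOn_of_preconnected_of_eventuallyEq hg
      (preconn_halfplane (5 / 4) 2 (by norm_num)) (z₀ := 3) (by constructor <;> norm_num) (by
        have : {s : ℂ | 2 < s.re} ∈ nhds (3:ℂ) :=
          (isOpen_lt continuous_const continuous_re).mem_nhds (by simp; norm_num)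
        filter_upwards [this] with s hs
        exact Z_eq0 Z hZs s w hw hs)
    exact this (show s ∈ _ from ⟨hs, by simpa using hs2⟩)
  have hf : AnalyticOnNhd ℂ (fun w => Z (s - w) w) {(1:ℂ)}ᶜ := by
    refine DifferentiableOn.analyticOnNhd (fun w hw => ?_) isOpen_compl_singleton
    exact ((hZd s w hw hs hs2).comp w
        (f := fun w : ℂ => (s - w, w)) (by fun_prop)).differentiableWithinAt
  have hg := (zH_diff_s₂ s hs).analyticOnNhd isOpen_compl_singleton
  have := hf.eqOn_of_preconnected_of_eventuallyEq hg
    (isConnected_compl_singleton_of_one_lt_rank (by simp) 1).isPreconnected (z₀ := 2)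
    (by simp) (by
      have : {s : ℂ | 1 < s.re} ∈ nhds (2:ℂ) :=
        (isOpen_lt continuous_const continuous_re).mem_nhds (by simp)
      filter_upwards [this] with w hw
      exact step1 w hw)
  exact this h2

lemma one_sub_exp_ne {w : ℂ} (hw : ‖w‖ < 4) (h0 : w ≠ 0) : 1 - cexp (-w) ≠ 0 := by
  intro h
  have h1 : cexp (-w) = 1 := (sub_eq_zero.1 h).symm
  obtain ⟨n, hn⟩ := Complex.exp_eq_one_iff.1 h1
  have hn0 : n ≠ 0 := by
    rintro rfl
    apply h0
    simpa using hn
  have h2 : ‖w‖ = |(n : ℝ)| * (2 * π) := by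
    rw [← norm_neg, hn]
    simp [abs_of_pos pi_pos]
  have h3 : (1:ℝ) ≤ |(n : ℝ)| := by
    have := Int.one_le_abs hn0
    exact_mod_cast this
  have := pi_gt_three
  nlinarith

lemma psi_exists : ∃ ψ : ℂ → ℂ, ∃ L : ℝ, 0 ≤ L ∧
    (∀ w : ℂ, ‖w‖ ≤ 3 → w ≠ 0 → 1 / (1 - cexp (-w)) = 1 / w + ψ w) ∧
    (∀ w w' : ℂ, ‖w‖ ≤ 3 → ‖w'‖ ≤ 3 → ‖ψ w - ψ w'‖ ≤ L * ‖w - w'‖) ∧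
    (∀ w : ℂ, ‖w‖ ≤ 3 → ‖ψ w‖ ≤ L) := by
  have hn : Metric.ball (0:ℂ) 4 ∈ nhds (0:ℂ) := Metric.ball_mem_nhds _ (by norm_num)
  have ho : IsOpen (Metric.ball (0:ℂ) 4) := Metric.isOpen_ball
  set f : ℂ → ℂ := fun w => 1 - cexp (-w) with hf
  have hfd : Differentiable ℂ f := by fun_prop
  set φ : ℂ → ℂ := dslope f 0 with hφ
  have hφd : DifferentiableOn ℂ φ (Metric.ball (0:ℂ) 4) :=
    (Complex.differentiableOn_dslope hn).2 hfd.differentiableOn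
  have hφ0 : φ 0 = 1 := by
    rw [hφ, dslope_same]
    have : HasDerivAt f (-(cexp (-0) * (-1))) 0 :=
      ((hasDerivAt_neg (0:ℂ)).cexp).const_sub 1
    rw [this.deriv]; simp
  have hφw : ∀ w, w ≠ 0 → φ w = (1 - cexp (-w)) / w := by
    intro w hw
    rw [hφ, dslope_of_ne _ hw, slope_def_field]
    simp [hf]
  have hφne : ∀ w ∈ Metric.ball (0:ℂ) 4, φ w ≠ 0 := by
    intro w hw
    by_cases h : w = 0
    · rw [h, hφ0]; exact one_ne_zero
    · rw [hφw w h]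
      exact div_ne_zero (one_sub_exp_ne (by simpa using hw) h) h
  set θ : ℂ → ℂ := fun w => (φ w)⁻¹ with hθ
  have hθd : DifferentiableOn ℂ θ (Metric.ball (0:ℂ) 4) := hφd.inv hφne
  set ψ : ℂ → ℂ := dslope θ 0 with hψ
  have hψd : DifferentiableOn ℂ ψ (Metric.ball (0:ℂ) 4) :=
    (Complex.differentiableOn_dslope hn).2 hθd
  have hsub : Metric.closedBall (0:ℂ) 3 ⊆ Metric.ball (0:ℂ) 4 :=
    Metric.closedBall_subset_ball (by norm_num)
  have hcomp : IsCompact (Metric.closedBall (0:ℂ) 3) := isCompact_closedBall _ _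
  obtain ⟨C1, hC1⟩ := hcomp.exists_bound_of_continuousOn (hψd.continuousOn.mono hsub)
  obtain ⟨C2, hC2⟩ := hcomp.exists_bound_of_continuousOn
    ((hψd.deriv ho).continuousOn.mono hsub)
  refine ⟨ψ, max 0 (max C1 C2), le_max_left _ _, ?_, ?_, ?_⟩
  · intro w hw h0
    rw [hψ, dslope_of_ne _ h0, slope_def_field]
    simp only [hθ, hφ0, hφw w h0]
    have := one_sub_exp_ne (by linarith : ‖w‖ < 4) h0
    field_simp
    ring
  · intro w w' hw hw'
    refine Convex.norm_image_sub_le_of_norm_deriv_le (s := Metric.closedBall (0:ℂ) 3)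
      (fun x hx => hψd.differentiableAt (ho.mem_nhds (hsub hx))) (fun x hx => ?_)
      (convex_closedBall _ _) (by simpa using hw') (by simpa using hw)
    exact (hC2 x hx).trans ((le_max_right _ _).trans (le_max_right _ _))
  · intro w hw
    exact (hC1 w (by simpa using hw)).trans ((le_max_left _ _).trans (le_max_right _ _))

noncomputable def ell (n : ℕ) : ℝ := Real.log (n + 1) - Real.log n

lemma ell_pos (n : ℕ) (hn : 1 ≤ n) : 0 < ell n := by
  unfold ell
  have : (1:ℝ) ≤ n := by exact_mod_cast hn
  exact sub_pos.2 (Real.log_lt_log (by linarith) (by linarith))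

lemma ell_le (n : ℕ) (hn : 1 ≤ n) : ell n ≤ 1 / n := by
  unfold ell
  have h1 : (1:ℝ) ≤ n := by exact_mod_cast hn
  rw [← Real.log_div (by linarith) (by linarith)]
  refine (Real.log_le_sub_one_of_pos (by positivity)).trans ?_
  apply le_of_eq; field_simp; ring

lemma ell_exp (n : ℕ) (hn : 1 ≤ n) : Real.exp (-ell n) = n / (n + 1) := by
  unfold ell
  have h1 : (1:ℝ) ≤ n := by exact_mod_cast hn
  rw [neg_sub, Real.exp_sub, Real.exp_log (by linarith), Real.exp_log (by linarith)]

lemma ell_diff (n : ℕ) (hn : 1 ≤ n) : |ell (n + 1) - ell n| ≤ 2 / ((n + 1 : ℕ) : ℝ) ^ 2 := by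
  have h1 : (1:ℝ) ≤ n := by exact_mod_cast hn
  have e1 : ell n - ell (n + 1) = Real.log (((n:ℝ) + 1) ^ 2 / (n * (n + 2))) := by
    unfold ell
    rw [Real.log_div (by positivity) (by positivity), Real.log_pow,
      Real.log_mul (by positivity) (by positivity)]
    push_cast
    rw [show (n : ℝ) + 1 + 1 = n + 2 by ring]
    ring
  have e2 : 0 ≤ ell n - ell (n + 1) := by
    rw [e1]
    apply Real.log_nonneg
    rw [one_le_div (by positivity)]; nlinarith
  rw [abs_sub_comm, abs_of_nonneg e2, e1]
  refine (Real.log_le_sub_one_of_pos (by positivity)).trans ?_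
  push_cast
  rw [div_sub_one (by positivity), div_le_div_iff₀ (by positivity) (by positivity)]
  nlinarith

lemma zeta_approx : ∃ C : ℝ, 0 ≤ C ∧ ∀ K : ℕ, 1 ≤ K → ∀ s : ℂ, s.re = 1 / 2 → ‖s‖ ≤ 3 * K →
    ‖riemannZeta s - ∑ k ∈ Finset.range K, ((k : ℂ) + 1) ^ (-s)‖
      ≤ √((K : ℝ) + 1) / ‖s‖ + C / √(K : ℝ) := by
  obtain ⟨ψ, L, hL, hψ1, hψ2, hψ3⟩ := psi_exists
  refine ⟨33 * L, by positivity, ?_⟩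
  intro K hK s hs hsK
  have hK1 : (1:ℝ) ≤ K := by exact_mod_cast hK
  have hsn : 1 / 2 ≤ ‖s‖ := by
    rw [← hs]; exact (le_abs_self _).trans (Complex.abs_re_le_norm s)
  have hs0 : s ≠ 0 := by rintro rfl; simp at hs
  have hs1 : s ≠ 1 := by rintro rfl; norm_num at hs
  have hs1' : s - 1 ≠ 0 := sub_ne_zero.2 hs1
  have hsinv : ‖(1:ℂ) / s‖ ≤ 2 := by
    rw [norm_div, norm_one, div_le_iff₀ (by linarith)]; linarith
  have hsinv' : ‖(1:ℂ) / s‖ ≤ 4 * ‖s‖ := by linarith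
  have hunit : ‖(1:ℂ) - 1 / s‖ = 1 := by
    have : (1:ℂ) - 1 / s = (s - 1) / s := by field_simp
    rw [this, norm_div]
    have h : ‖s - 1‖ = ‖s‖ := by
      rw [← sq_eq_sq₀ (norm_nonneg _) (norm_nonneg _), ← Complex.normSq_eq_norm_sq,
        ← Complex.normSq_eq_norm_sq, Complex.normSq_apply, Complex.normSq_apply]
      simp [hs]; ring
    rw [h, div_self (by positivity)]
  set w : ℕ → ℂ := fun n => s * (ell n : ℂ) with hw
  set e : ℕ → ℂ := fun n => (n : ℂ) ^ (-s) with he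
  set c : ℕ → ℂ := fun n => 1 / (1 - cexp (-w n)) with hc
  have hellpos : ∀ n, K ≤ n → 0 < ell n := fun n hn => ell_pos n (hK.trans hn)
  have hell1 : ∀ n, K ≤ n → ‖(ell n : ℂ)‖ ≤ 3 := by
    intro n hn
    rw [Complex.norm_real, Real.norm_of_nonneg (hellpos n hn).le]
    have h1 : (1:ℝ) ≤ n := by exact_mod_cast hK.trans hn
    refine (ell_le n (hK.trans hn)).trans ?_
    rw [div_le_iff₀ (by linarith)]; linarith
  have hwn : ∀ n, K ≤ n → ‖w n‖ ≤ 3 := by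
    intro n hn
    rw [hw]
    simp only [norm_mul, Complex.norm_real]
    rw [Real.norm_of_nonneg (hellpos n hn).le]
    have h1 : (K:ℝ) ≤ n := by exact_mod_cast hn
    have h2 := ell_le n (hK.trans hn)
    calc ‖s‖ * ell n ≤ (3 * K) * (1 / n) := by
          apply mul_le_mul hsK h2 (hellpos n hn).le (by positivity)
      _ ≤ 3 := by
          rw [mul_one_div, div_le_iff₀ (by linarith)]; linarith
  have hw0 : ∀ n, K ≤ n → w n ≠ 0 := fun n hn =>
    mul_ne_zero hs0 (by exact_mod_cast (hellpos n hn).ne')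
  have hcw : ∀ n, K ≤ n → c n = 1 / s * ((n : ℂ) + 1 - ψ (ell n)) + ψ (w n) := by
    intro n hn
    rw [hc]
    simp only []
    rw [hψ1 (w n) (hwn n hn) (hw0 n hn)]
    have h1 := hψ1 (ell n) (hell1 n hn) (by exact_mod_cast (hellpos n hn).ne')
    have h2 : cexp (-(ell n : ℂ)) = (n : ℂ) / (n + 1) := by
      have := ell_exp n (hK.trans hn)
      have h3 : ((Real.exp (-ell n) : ℝ) : ℂ) = ((n / (n + 1) : ℝ) : ℂ) := by rw [this]
      push_cast at h3
      exact h3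
    rw [h2] at h1
    have hn1 : (n : ℂ) + 1 ≠ 0 := by exact_mod_cast (by omega : n + 1 ≠ 0)
    have h4 : 1 / (1 - (n : ℂ) / (n + 1)) = n + 1 := by
      field_simp; ring
    rw [h4] at h1
    have h5 : (n : ℂ) + 1 - ψ (ell n) = 1 / (ell n : ℂ) := by rw [h1]; ring
    rw [h5, hw]
    simp only []
    congr 1
    rw [div_mul_div_comm, one_mul]
  have hestep : ∀ n, K ≤ n → e (n + 1) = e n * cexp (-w n) := by
    intro n hn
    have h1 : (n : ℂ) ≠ 0 := by exact_mod_cast (by omega : n ≠ 0)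
    have h2 : ((n + 1 : ℕ) : ℂ) ≠ 0 := by exact_mod_cast (by omega : n + 1 ≠ 0)
    simp only [he, hw]
    rw [Complex.cpow_def_of_ne_zero h1, Complex.cpow_def_of_ne_zero h2, ← Complex.exp_add]
    congr 1
    rw [← Complex.natCast_log, ← Complex.natCast_log, ell]
    push_cast
    ring
  have hec : ∀ n, K ≤ n → e (n + 1) * c n = e n * c n - e n := by
    intro n hn
    have := one_sub_exp_ne (by linarith [hwn n hn] : ‖w n‖ < 4) (hw0 n hn)
    rw [hestep n hn, hc]
    simp only []
    field_simp
    ring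
  have htel : ∀ M, K + 1 ≤ M → ∑ n ∈ Finset.Ico (K + 1) M, e n * (1 - c n + c (n - 1))
      = e (K + 1) * c K - e M * c (M - 1) := by
    intro M hM
    induction M, hM using Nat.le_induction with
    | base => simp
    | succ M hM ih =>
      rw [Finset.sum_Ico_succ_top hM, ih, Nat.add_sub_cancel, hec M (by omega)]
      ring
  set ε : ℕ → ℂ := fun n => 1 / s * (ψ (ell n) - ψ (ell (n - 1))) - (ψ (w n) - ψ (w (n - 1)))
    with hε
  have hεeq : ∀ n, K + 1 ≤ n → 1 - c n + c (n - 1) = 1 - 1 / s + ε n := by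
    intro n hn
    rw [hcw n (by omega), hcw (n - 1) (by omega), hε]
    simp only []
    have : ((n - 1 : ℕ) : ℂ) = n - 1 := by
      rw [Nat.cast_sub (by omega)]; simp
    rw [this]
    ring
  have hεb : ∀ n, K + 1 ≤ n → ‖ε n‖ ≤ 10 * L * ‖s‖ * ((n : ℝ) ^ 2)⁻¹ := by
    intro n hn
    obtain ⟨m, rfl⟩ : ∃ m, n = m + 1 := ⟨n - 1, by omega⟩
    have hd := ell_diff m (by omega)
    simp only [hε, Nat.add_sub_cancel]
    have a1 := hψ2 (ell (m + 1)) (ell m) (hell1 _ (by omega)) (hell1 _ (by omega))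
    have a2 := hψ2 (w (m + 1)) (w m) (hwn _ (by omega)) (hwn _ (by omega))
    have b1 : ‖(ell (m + 1) : ℂ) - ell m‖ ≤ 2 / ((m + 1 : ℕ) : ℝ) ^ 2 := by
      rw [← Complex.ofReal_sub, Complex.norm_real, Real.norm_eq_abs]; exact hd
    have b2 : ‖w (m + 1) - w m‖ ≤ ‖s‖ * (2 / ((m + 1 : ℕ) : ℝ) ^ 2) := by
      simp only [hw]
      rw [← mul_sub, norm_mul]
      gcongr
    calc _ ≤ ‖1 / s‖ * ‖ψ (ell (m + 1)) - ψ (ell m)‖ + ‖ψ (w (m + 1)) - ψ (w m)‖ := by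
          refine (norm_sub_le _ _).trans ?_
          rw [norm_mul]
      _ ≤ 4 * ‖s‖ * (L * (2 / ((m + 1 : ℕ) : ℝ) ^ 2))
          + L * (‖s‖ * (2 / ((m + 1 : ℕ) : ℝ) ^ 2)) := by
          gcongr
          · exact a1.trans (by gcongr)
          · exact a2.trans (by gcongr)
      _ = _ := by rw [div_eq_mul_inv]; ring
  have hen : ∀ n, 1 ≤ n → ‖e n‖ = (√(n : ℝ))⁻¹ := by
    intro n hn
    simp only [he]
    rw [Complex.norm_natCast_cpow_of_pos (by omega), Complex.neg_re, hs,
      Real.rpow_neg (by positivity), Real.sqrt_eq_rpow]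
  have hsumε : ∀ M, ‖∑ n ∈ Finset.Ico (K + 1) M, e n * ε n‖ ≤ 30 * L / √(K : ℝ) := by
    intro M
    rcases le_total M K with hMK | hMK
    · rw [Finset.Ico_eq_empty (by omega)]; simp; positivity
    have hsub : Finset.Ico (K + 1) M ⊆ Finset.Ioc K M := by
      intro n hn
      rw [Finset.mem_Ico] at hn
      rw [Finset.mem_Ioc]; omega
    calc _ ≤ ∑ n ∈ Finset.Ico (K + 1) M, 10 * L * ‖s‖ * (√(K : ℝ))⁻¹ * ((n : ℝ) ^ 2)⁻¹ := by
          refine (norm_sum_le _ _).trans (Finset.sum_le_sum fun n hn => ?_)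
          rw [Finset.mem_Ico] at hn
          rw [norm_mul, hen n (by omega)]
          calc _ ≤ (√(K : ℝ))⁻¹ * (10 * L * ‖s‖ * ((n : ℝ) ^ 2)⁻¹) := by
                gcongr
                · omega
                · exact hεb n hn.1
            _ = _ := by ring
      _ ≤ ∑ n ∈ Finset.Ioc K M, 10 * L * ‖s‖ * (√(K : ℝ))⁻¹ * ((n : ℝ) ^ 2)⁻¹ :=
          Finset.sum_le_sum_of_subset_of_nonneg hsub (fun i _ _ => by positivity)
      _ = 10 * L * ‖s‖ * (√(K : ℝ))⁻¹ * ∑ n ∈ Finset.Ioc K M, ((n : ℝ) ^ 2)⁻¹ := by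
          rw [Finset.mul_sum]
      _ ≤ 10 * L * (3 * K) * (√(K : ℝ))⁻¹ * (K : ℝ)⁻¹ := by
          have h1 : ∑ n ∈ Finset.Ioc K M, ((n : ℝ) ^ 2)⁻¹ ≤ (K : ℝ)⁻¹ - (M : ℝ)⁻¹ :=
            sum_Ioc_inv_sq_le_sub (by omega) hMK
          have h2 : (0:ℝ) ≤ (M : ℝ)⁻¹ := by positivity
          gcongr
          linarith
      _ = _ := by
          field_simp
          ring
  set X := riemannZeta s - ∑ k ∈ Finset.range K, ((k : ℂ) + 1) ^ (-s) with hX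
  set β : ℕ → ℂ := fun n => - (1 / s) * ψ (ell n) + ψ (w n) with hβ
  have hβb : ∀ n, K ≤ n → ‖β n‖ ≤ 3 * L := by
    intro n hn
    simp only [hβ]
    refine (norm_add_le _ _).trans ?_
    rw [norm_mul, norm_neg]
    have h1 := hψ3 _ (hell1 n hn)
    have h2 := hψ3 _ (hwn n hn)
    have : ‖1 / s‖ * ‖ψ (ell n)‖ ≤ 2 * L := by gcongr
    linarith
  have hcβ : ∀ n, K ≤ n → c n = 1 / s * ((n : ℂ) + 1) + β n := by
    intro n hn
    rw [hcw n hn]; simp only [hβ]; ring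
  have hXM : ∀ M, K + 1 ≤ M → (1 - 1 / s) * X = (1 - 1 / s) * (zr M s + e M)
      + e (K + 1) * c K - e M * β (M - 1) - ∑ n ∈ Finset.Ico (K + 1) M, e n * ε n := by
    intro M hM
    have h1 := htel M hM
    have h2 : ∑ n ∈ Finset.Ico (K + 1) M, e n * (1 - c n + c (n - 1))
        = (1 - 1 / s) * ∑ n ∈ Finset.Ico (K + 1) M, e n
          + ∑ n ∈ Finset.Ico (K + 1) M, e n * ε n := by
      rw [Finset.mul_sum, ← Finset.sum_add_distrib]
      refine Finset.sum_congr rfl fun n hn => ?_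
      rw [hεeq n (Finset.mem_Ico.1 hn).1]
      ring
    have hM0 : (M : ℂ) ≠ 0 := by exact_mod_cast (by omega : M ≠ 0)
    have h3 : (M : ℂ) ^ (1 - s) = M * e M := by
      simp only [he]
      rw [sub_eq_add_neg, Complex.cpow_add _ _ hM0, Complex.cpow_one]
    have h4 : X = zr M s + M * e M / (s - 1) + e M + ∑ n ∈ Finset.Ico (K + 1) M, e n := by
      have h5 : ∑ k ∈ Finset.range M, ((k : ℂ) + 1) ^ (-s)
          = ∑ k ∈ Finset.range K, ((k : ℂ) + 1) ^ (-s) + ∑ n ∈ Finset.Ico (K + 1) M, e n + e M := by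
        rw [add_assoc, ← Finset.sum_Ico_succ_top hM, ← Finset.sum_Ico_add' e K M 1,
          ← Finset.sum_range_add_sum_Ico _ (by omega : K ≤ M)]
        congr 1
        refine Finset.sum_congr rfl fun n _ => ?_
        simp [he]
      rw [hX, zr, h5, h3]
      ring
    rw [h2, hcβ (M - 1) (by omega)] at h1
    have h6 : ((M - 1 : ℕ) : ℂ) = M - 1 := by
      rw [Nat.cast_sub (by omega)]; simp
    rw [h6] at h1
    have h7 : (1 - 1 / s) * ∑ n ∈ Finset.Ico (K + 1) M, e n = e (K + 1) * c K
        - e M * (1 / s * (M - 1 + 1) + β (M - 1)) - ∑ n ∈ Finset.Ico (K + 1) M, e n * ε n := by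
      rw [← h1]; ring
    have h8 : (1 - 1 / s) * (M * e M / (s - 1)) = e M * (1 / s * M) := by
      field_simp
    rw [h4, mul_add, h7, mul_add, mul_add, h8]
    ring
  have hbound : ∀ M, K + 1 ≤ M → ‖X‖ ≤ (‖zr M s‖ + (√(M : ℝ))⁻¹ * (1 + 3 * L))
      + (‖e (K + 1)‖ * ‖c K‖ + 30 * L / √(K : ℝ)) := by
    intro M hM
    have h1 : ‖X‖ = ‖(1 - 1 / s) * X‖ := by rw [norm_mul, hunit, one_mul]
    rw [h1, hXM M hM]
    refine (norm_sub_le _ _).trans ?_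
    have h2 := norm_sub_le ((1 - 1 / s) * (zr M s + e M) + e (K + 1) * c K) (e M * β (M - 1))
    have h3 := norm_add_le ((1 - 1 / s) * (zr M s + e M)) (e (K + 1) * c K)
    rw [norm_mul, hunit, one_mul, norm_mul (e (K + 1))] at h3
    have h4 := norm_add_le (zr M s) (e M)
    rw [norm_mul (e M), hen M (by omega)] at h2
    rw [hen M (by omega)] at h4
    have h5 : (√(M : ℝ))⁻¹ * ‖β (M - 1)‖ ≤ (√(M : ℝ))⁻¹ * (3 * L) := by
      gcongr; exact hβb _ (by omega)
    have h6 := hsumε M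
    linarith
  have hlim : Tendsto (fun M : ℕ => (‖zr M s‖ + (√(M : ℝ))⁻¹ * (1 + 3 * L))
      + (‖e (K + 1)‖ * ‖c K‖ + 30 * L / √(K : ℝ))) atTop
      (nhds ((0 + 0 * (1 + 3 * L)) + (‖e (K + 1)‖ * ‖c K‖ + 30 * L / √(K : ℝ)))) := by
    have h1 := (zr_tendsto s (by rw [hs]; norm_num) hs1).norm
    rw [norm_zero] at h1
    have h2 : Tendsto (fun M : ℕ => (√(M : ℝ))⁻¹) atTop (nhds 0) :=
      (Real.tendsto_sqrt_atTop.comp tendsto_natCast_atTop_atTop).inv_tendsto_atTop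
    exact (h1.add (h2.mul_const _)).add_const _
  have hfin := ge_of_tendsto hlim (by
    filter_upwards [eventually_ge_atTop (K + 1)] with M hM
    exact hbound M hM)
  refine hfin.trans ?_
  have hcK : ‖c K‖ ≤ ((K : ℝ) + 1) / ‖s‖ + 3 * L := by
    rw [hcβ K le_rfl]
    refine (norm_add_le _ _).trans (add_le_add ?_ (hβb K le_rfl))
    rw [norm_mul, norm_div, norm_one]
    have : ‖(K : ℂ) + 1‖ = (K : ℝ) + 1 := by
      have : ((K : ℂ) + 1) = ((K + 1 : ℕ) : ℂ) := by push_cast; ring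
      rw [this, Complex.norm_natCast]; push_cast; ring
    rw [this]
    apply le_of_eq; ring
  have heK : ‖e (K + 1)‖ = (√((K : ℝ) + 1))⁻¹ := by
    rw [hen (K + 1) (by omega)]; push_cast; rfl
  have h9 : ‖e (K + 1)‖ * ‖c K‖ ≤ √((K : ℝ) + 1) / ‖s‖ + 3 * L / √(K : ℝ) := by
    rw [heK]
    calc _ ≤ (√((K : ℝ) + 1))⁻¹ * (((K : ℝ) + 1) / ‖s‖ + 3 * L) := by gcongr
      _ = √((K : ℝ) + 1) / ‖s‖ + 3 * L / √((K : ℝ) + 1) := by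
        have h : (√((K : ℝ) + 1))⁻¹ * ((K : ℝ) + 1) = √((K : ℝ) + 1) := by
          rw [inv_mul_eq_div, Real.div_sqrt]
        rw [mul_add, ← mul_div_assoc, h]
        congr 1
        ring
      _ ≤ _ := by
        gcongr
        linarith
  calc _ ≤ (0 + 0 * (1 + 3 * L)) + ((√((K : ℝ) + 1) / ‖s‖ + 3 * L / √(K : ℝ))
        + 30 * L / √(K : ℝ)) := by gcongr
    _ = _ := by ring

lemma sum_inv_sqrt (K : ℕ) : ∑ n ∈ Finset.Ico 1 (K + 1), (√(n : ℝ))⁻¹ ≤ 2 * √(K : ℝ) := by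
  induction K with
  | zero => simp
  | succ k ih =>
    rw [Finset.sum_Ico_succ_top (by omega)]
    have h1 : 0 < √((k + 1 : ℕ) : ℝ) := Real.sqrt_pos.2 (by positivity)
    have h2 : 0 ≤ √(k : ℝ) := Real.sqrt_nonneg _
    have h3 : √((k + 1 : ℕ) : ℝ) ^ 2 = k + 1 := by
      rw [Real.sq_sqrt (by positivity)]; push_cast; ring
    have h4 : √(k : ℝ) ^ 2 = k := Real.sq_sqrt (by positivity)
    generalize √((k + 1 : ℕ) : ℝ) = u at *
    generalize √(k : ℝ) = v at *
    have h5 : u⁻¹ ≤ 2 * u - 2 * v := by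
      rw [inv_le_iff_one_le_mul₀ h1]
      nlinarith [sq_nonneg (u - v)]
    linarith

lemma harm_bound (K : ℕ) (hK : 1 ≤ K) :
    |∑ n ∈ Finset.Ico 1 (K + 1), ((n : ℝ))⁻¹ - Real.log K| ≤ 1 := by
  have h1 := harmonic_le_one_add_log K
  have h2 := log_add_one_le_harmonic K
  have h3 : ((harmonic K : ℚ) : ℝ) = ∑ n ∈ Finset.Ico 1 (K + 1), ((n : ℝ))⁻¹ := by
    rw [harmonic_eq_sum_Icc]
    push_cast
    rfl
  rw [h3] at h1 h2
  have h4 : Real.log K ≤ Real.log ((K + 1 : ℕ) : ℝ) := by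
    apply Real.log_le_log
    · exact_mod_cast hK
    · push_cast; linarith
  rw [abs_le]
  constructor <;> linarith

lemma coeff_bounds (a b c : ℕ → ℂ) (β κ : ℝ) (hβ : 0 ≤ β) (hκ : 0 ≤ κ)
    (hab : ∀ n, a n = b n + c n)
    (hb : ∀ n, 1 ≤ n → ‖b n‖ = β * (√(n : ℝ))⁻¹)
    (hc : ∀ n, 1 ≤ n → ‖c n‖ ≤ κ * (n : ℝ) ^ (-(11 / 8) : ℝ)) (K : ℕ) (hK : 1 ≤ K) :
    |∑ n ∈ Finset.Ico 1 (K + 1), ‖a n‖ ^ 2 - β ^ 2 * Real.log K|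
        ≤ β ^ 2 + (2 * β * κ + κ ^ 2) * C8 ∧
    ∑ n ∈ Finset.Ico 1 (K + 1), (n : ℝ) * ‖a n‖ ^ 2 ≤ (β + κ) ^ 2 * K ∧
    ∑ n ∈ Finset.Ico 1 (K + 1), ‖a n‖ ≤ (β + κ) * (2 * √(K : ℝ)) := by
  have hcs : ∀ n : ℕ, 1 ≤ n → (n : ℝ) ^ (-(11 / 8) : ℝ) ≤ (√(n : ℝ))⁻¹ := by
    intro n hn
    rw [Real.sqrt_eq_rpow, ← Real.rpow_neg (by positivity)]
    exact Real.rpow_le_rpow_of_exponent_le (by exact_mod_cast hn) (by norm_num)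
  have ha : ∀ n, 1 ≤ n → ‖a n‖ ≤ (β + κ) * (√(n : ℝ))⁻¹ := by
    intro n hn
    rw [hab]
    refine (norm_add_le _ _).trans ?_
    rw [hb n hn, add_mul]
    have := hc n hn
    have h2 := mul_le_mul_of_nonneg_left (hcs n hn) hκ
    linarith
  have hsq : ∀ n : ℕ, 1 ≤ n → ((√(n : ℝ))⁻¹) ^ 2 = (n : ℝ)⁻¹ := by
    intro n hn
    rw [inv_pow, Real.sq_sqrt (by positivity)]
  have ha2 : ∀ n, 1 ≤ n → |‖a n‖ ^ 2 - β ^ 2 * (n : ℝ)⁻¹|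
      ≤ (2 * β * κ + κ ^ 2) * (n : ℝ) ^ (-(9 / 8) : ℝ) := by
    intro n hn
    have h1 : |‖a n‖ - ‖b n‖| ≤ ‖c n‖ := by
      have := abs_norm_sub_norm_le (a n) (b n)
      rwa [hab, add_sub_cancel_left, ← hab] at this
    have h2 : ‖a n‖ ^ 2 - β ^ 2 * (n : ℝ)⁻¹ = (‖a n‖ - ‖b n‖) * (‖a n‖ + ‖b n‖) := by
      rw [← hsq n hn, hb n hn]; ring
    have hs0 : 0 ≤ (√(n : ℝ))⁻¹ := by positivity
    have hs1 : (√(n : ℝ))⁻¹ ≤ 1 := by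
      apply inv_le_one_of_one_le₀
      rw [Real.one_le_sqrt]; exact_mod_cast hn
    have h3 : ‖a n‖ + ‖b n‖ ≤ 2 * β + κ := by
      have := ha n hn
      rw [hb n hn]
      nlinarith
    have h4 : (n : ℝ) ^ (-(11 / 8) : ℝ) ≤ (n : ℝ) ^ (-(9 / 8) : ℝ) :=
      Real.rpow_le_rpow_of_exponent_le (by exact_mod_cast hn) (by norm_num)
    rw [h2, abs_mul, abs_of_nonneg (by positivity : 0 ≤ ‖a n‖ + ‖b n‖)]
    calc _ ≤ (κ * (n : ℝ) ^ (-(9 / 8) : ℝ)) * (2 * β + κ) := by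
          apply mul_le_mul _ h3 (by positivity) (by positivity)
          exact h1.trans ((hc n hn).trans (mul_le_mul_of_nonneg_left h4 hκ))
      _ = _ := by ring
  refine ⟨?_, ?_, ?_⟩
  · have e : ∑ n ∈ Finset.Ico 1 (K + 1), ‖a n‖ ^ 2 - β ^ 2 * Real.log K
        = ∑ n ∈ Finset.Ico 1 (K + 1), (‖a n‖ ^ 2 - β ^ 2 * (n : ℝ)⁻¹)
          + β ^ 2 * (∑ n ∈ Finset.Ico 1 (K + 1), ((n : ℝ))⁻¹ - Real.log K) := by
      rw [Finset.sum_sub_distrib, ← Finset.mul_sum]; ring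
    rw [e]
    refine (abs_add_le _ _).trans ?_
    rw [add_comm (β ^ 2)]
    refine add_le_add ?_ ?_
    · refine (Finset.abs_sum_le_sum_abs _ _).trans ?_
      refine (Finset.sum_le_sum fun n hn => ha2 n (Finset.mem_Ico.1 hn).1).trans ?_
      rw [← Finset.mul_sum]
      exact mul_le_mul_of_nonneg_left (C8_sum _) (by positivity)
    · rw [abs_mul, abs_of_nonneg (sq_nonneg β)]
      have := harm_bound K hK
      nlinarith [sq_nonneg β]
  · calc _ ≤ ∑ n ∈ Finset.Ico 1 (K + 1), (β + κ) ^ 2 := by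
          refine Finset.sum_le_sum fun n hn => ?_
          have hn1 := (Finset.mem_Ico.1 hn).1
          have hn0 : (0 : ℝ) < n := by exact_mod_cast hn1
          calc (n : ℝ) * ‖a n‖ ^ 2 ≤ n * ((β + κ) * (√(n : ℝ))⁻¹) ^ 2 := by
                gcongr; exact ha n hn1
            _ = _ := by
                rw [mul_pow, hsq n hn1]; field_simp
      _ = _ := by simp; ring
  · refine (Finset.sum_le_sum fun n hn => ha n (Finset.mem_Ico.1 hn).1).trans ?_
    rw [← Finset.mul_sum]
    exact mul_le_mul_of_nonneg_left (sum_inv_sqrt K) (by positivity)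

/-- Coefficients of the approximating Dirichlet polynomial. -/
noncomputable def cb (s₂ : ℂ) (n : ℕ) : ℂ := (n : ℂ) ^ (-((1 / 2 : ℂ) + s₂.im * I)) / (s₂ - 1)

noncomputable def cc (σ₁ : ℝ) (s₂ : ℂ) (n : ℕ) : ℂ := (n : ℂ) ^ (-(σ₁ : ℂ)) * zr n s₂

lemma cb_norm (s₂ : ℂ) (n : ℕ) (hn : 1 ≤ n) : ‖cb s₂ n‖ = ‖s₂ - 1‖⁻¹ * (√(n : ℝ))⁻¹ := by
  unfold cb
  rw [norm_div, Complex.norm_natCast_cpow_of_pos (by omega), Real.sqrt_eq_rpow,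
    ← Real.rpow_neg (by positivity), div_eq_inv_mul]
  congr 2
  simp

lemma cc_norm (σ₁ : ℝ) (s₂ : ℂ) (h : σ₁ + s₂.re = 3 / 2) (h2 : s₂ ≠ 1) (n : ℕ) (hn : 1 ≤ n) :
    ‖cc σ₁ s₂ n‖ ≤ zK s₂ * (n : ℝ) ^ (-(11 / 8) : ℝ) := by
  unfold cc
  rw [norm_mul, Complex.norm_natCast_cpow_of_pos (by omega)]
  have hn0 : (0 : ℝ) < n := by exact_mod_cast hn
  calc _ ≤ (n : ℝ) ^ (-(σ₁ : ℂ)).re * (zK s₂ * (n : ℝ) ^ (1 / 8 - s₂.re)) := by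
        gcongr; exact zr_bound n hn s₂ h2
    _ = zK s₂ * ((n : ℝ) ^ (-(σ₁ : ℂ)).re * (n : ℝ) ^ (1 / 8 - s₂.re)) := by ring
    _ = _ := by
        rw [← Real.rpow_add hn0]
        congr 2
        simp
        linarith

lemma exp_log_cpow (n : ℕ) (hn : 1 ≤ n) (t : ℝ) :
    cexp ((-(t * Real.log n) : ℝ) * I) = (n : ℂ) ^ (-((t : ℂ) * I)) := by
  have hn0 : (n : ℂ) ≠ 0 := by exact_mod_cast (by omega : n ≠ 0)
  rw [Complex.cpow_def_of_ne_zero hn0, Complex.natCast_log.symm]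
  push_cast
  congr 1
  ring

lemma coeff_term (σ₁ : ℝ) (s₂ : ℂ) (h : σ₁ + s₂.re = 3 / 2) (t : ℝ) (k : ℕ) :
    (cb s₂ (k + 1) + cc σ₁ s₂ (k + 1)) * cexp ((-(t * Real.log ((k + 1 : ℕ) : ℝ)) : ℝ) * I)
      = ((k : ℂ) + 1) ^ (-((σ₁ : ℂ) + t * I + s₂ - 1)) / (s₂ - 1)
        + zterm k ((σ₁ : ℂ) + t * I + s₂) s₂ := by
  rw [exp_log_cpow _ (by omega)]
  have hn0 : ((k + 1 : ℕ) : ℂ) ≠ 0 := by exact_mod_cast (by omega : k + 1 ≠ 0)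
  have e : ((k : ℂ) + 1) = ((k + 1 : ℕ) : ℂ) := by push_cast; ring
  have e1 : -((σ₁ : ℂ) + t * I + s₂ - 1) = -((1 / 2 : ℂ) + s₂.im * I) + -((t : ℂ) * I) := by
    have h1 : (σ₁ : ℂ) + (s₂.re : ℂ) = 3 / 2 := by
      rw [← Complex.ofReal_add, h]; push_cast; ring
    have h2 := Complex.re_add_im s₂
    linear_combination -h1 + h2
  unfold zterm cb cc
  rw [e, e1, Complex.cpow_add _ _ hn0]
  have e2 : -((σ₁ : ℂ) + t * I + s₂ - s₂) = -(σ₁ : ℂ) + -((t : ℂ) * I) := by ring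
  rw [e2, Complex.cpow_add _ _ hn0]
  ring

lemma tail_bound (s s₂ : ℂ) (h : s₂ ≠ 1) (hs : s.re = 3 / 2) (K : ℕ) (hK : 1 ≤ K) :
    ‖∑' m : ℕ, zterm (m + K) s s₂‖ ≤ zK s₂ * C8 * (K : ℝ) ^ (-(1 / 4) : ℝ) := by
  have hz := zK_nonneg s₂
  have hK0 : (0 : ℝ) < K := by exact_mod_cast hK
  have h98 : Summable (fun n : ℕ => (n : ℝ) ^ (-(9 / 8) : ℝ)) :=
    Real.summable_nat_rpow.2 (by norm_num)
  have hb : ∀ m : ℕ, ‖zterm (m + K) s s₂‖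
      ≤ zK s₂ * (K : ℝ) ^ (-(1 / 4) : ℝ) * ((m + (K + 1) : ℕ) : ℝ) ^ (-(9 / 8) : ℝ) := by
    intro m
    refine (zterm_bound (m + K) s s₂ h).trans ?_
    have e : (1 / 8 - s.re) = -(1 / 4) + -(9 / 8) := by rw [hs]; norm_num
    have hp : (0 : ℝ) < ((m + K + 1 : ℕ) : ℝ) := by positivity
    rw [e, Real.rpow_add hp, mul_assoc]
    have : ((m + K + 1 : ℕ) : ℝ) ^ (-(1 / 4) : ℝ) ≤ (K : ℝ) ^ (-(1 / 4) : ℝ) := by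
      apply Real.rpow_le_rpow_of_nonpos hK0 _ (by norm_num)
      exact_mod_cast (by omega : K ≤ m + K + 1)
    have e3 : m + (K + 1) = m + K + 1 := by ring
    rw [e3]
    gcongr
  have hsum := ((summable_nat_add_iff (K + 1)).2 h98).mul_left (zK s₂ * (K : ℝ) ^ (-(1 / 4) : ℝ))
  refine (tsum_of_norm_bounded hsum.hasSum hb).trans ?_
  rw [tsum_mul_left]
  have h1 : ∑' m : ℕ, ((m + (K + 1) : ℕ) : ℝ) ^ (-(9 / 8) : ℝ) ≤ C8 := by
    unfold C8
    rw [← h98.sum_add_tsum_nat_add (K + 1)]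
    have : 0 ≤ ∑ i ∈ Finset.range (K + 1), (i : ℝ) ^ (-(9 / 8) : ℝ) :=
      Finset.sum_nonneg fun i _ => by positivity
    linarith
  calc _ ≤ zK s₂ * (K : ℝ) ^ (-(1 / 4) : ℝ) * C8 := by gcongr
    _ = _ := by ring

/-- The approximate formula. -/
lemma approx_F (σ₁ : ℝ) (s₂ : ℂ) (h : σ₁ + s₂.re = 3 / 2) (h2 : s₂ ≠ 1) :
    ∃ C : ℝ, 0 ≤ C ∧ ∀ K : ℕ, 1 ≤ K → ∀ t : ℝ, ‖(σ₁ : ℂ) + t * I + s₂ - 1‖ ≤ 3 * K →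
      ‖zH ((σ₁ : ℂ) + t * I + s₂) s₂ - ∑ n ∈ Finset.Ico 1 (K + 1),
        (cb s₂ n + cc σ₁ s₂ n) * cexp ((-(t * Real.log n) : ℝ) * I)‖
        ≤ C * (√(K : ℝ) / ‖(σ₁ : ℂ) + t * I + s₂ - 1‖ + (K : ℝ) ^ (-(1 / 4) : ℝ)) := by
  obtain ⟨C, hC0, hC⟩ := zeta_approx
  have hz := zK_nonneg s₂
  have hc8 := C8_nonneg
  refine ⟨‖s₂ - 1‖⁻¹ * (2 + C) + zK s₂ * C8, by positivity, fun K hK t ht => ?_⟩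
  set s := (σ₁ : ℂ) + t * I + s₂ with hs
  have hsre : s.re = 3 / 2 := by rw [hs]; simp; linarith
  have hs1 : (s - 1).re = 1 / 2 := by rw [Complex.sub_re, hsre]; norm_num
  have e1 : ∑ n ∈ Finset.Ico 1 (K + 1),
        (cb s₂ n + cc σ₁ s₂ n) * cexp ((-(t * Real.log n) : ℝ) * I)
      = (∑ k ∈ Finset.range K, ((k : ℂ) + 1) ^ (-(s - 1))) / (s₂ - 1)
        + ∑ k ∈ Finset.range K, zterm k s s₂ := by
    have := Finset.sum_Ico_add' (fun n : ℕ =>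
      (cb s₂ n + cc σ₁ s₂ n) * cexp ((-(t * Real.log n) : ℝ) * I)) 0 K 1
    rw [zero_add] at this
    rw [← this, Finset.sum_div, ← Finset.sum_add_distrib, Finset.range_eq_Ico]
    exact Finset.sum_congr rfl fun k _ => coeff_term σ₁ s₂ h t k
  have e2 : zH s s₂ = riemannZeta (s - 1) / (s₂ - 1)
      + (∑ k ∈ Finset.range K, zterm k s s₂ + ∑' m : ℕ, zterm (m + K) s s₂) := by
    rw [(zterm_summable s s₂ h2 (by rw [hsre]; norm_num)).sum_add_tsum_nat_add K]; rfl
  have e3 : zH s s₂ - ∑ n ∈ Finset.Ico 1 (K + 1),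
        (cb s₂ n + cc σ₁ s₂ n) * cexp ((-(t * Real.log n) : ℝ) * I)
      = (riemannZeta (s - 1) - ∑ k ∈ Finset.range K, ((k : ℂ) + 1) ^ (-(s - 1))) / (s₂ - 1)
        + ∑' m : ℕ, zterm (m + K) s s₂ := by
    rw [e1, e2]; ring
  rw [e3]
  refine (norm_add_le _ _).trans ?_
  rw [norm_div, div_eq_inv_mul]
  have hb1 := hC K hK (s - 1) hs1 ht
  have hb2 := tail_bound s s₂ h2 hsre K hK
  have hK1 : (1 : ℝ) ≤ K := by exact_mod_cast hK
  have hq : √((K : ℝ) + 1) ≤ 2 * √(K : ℝ) := by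
    rw [Real.sqrt_le_left (by positivity), mul_pow, Real.sq_sqrt (by positivity)]
    linarith
  have hq2 : C / √(K : ℝ) ≤ C * (K : ℝ) ^ (-(1 / 4) : ℝ) := by
    rw [div_eq_mul_inv, Real.sqrt_eq_rpow, ← Real.rpow_neg (by positivity)]
    exact mul_le_mul_of_nonneg_left
      (Real.rpow_le_rpow_of_exponent_le hK1 (by norm_num)) hC0
  have hn : 0 ≤ ‖s₂ - 1‖⁻¹ := by positivity
  set A := √(K : ℝ) / ‖s - 1‖ with hA
  set B := (K : ℝ) ^ (-(1 / 4) : ℝ) with hB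
  have hA0 : 0 ≤ A := by positivity
  have hB0 : 0 ≤ B := by positivity
  have hq3 : √((K : ℝ) + 1) / ‖s - 1‖ ≤ 2 * A := by
    rw [hA, ← mul_div_assoc]; gcongr
  have hb3 : ‖riemannZeta (s - 1) - ∑ k ∈ Finset.range K, ((k : ℂ) + 1) ^ (-(s - 1))‖
      ≤ (2 + C) * (A + B) := by nlinarith [mul_nonneg hC0 hA0]
  calc _ ≤ ‖s₂ - 1‖⁻¹ * ((2 + C) * (A + B)) + zK s₂ * C8 * B := by gcongr
    _ ≤ _ := by
      have : 0 ≤ zK s₂ * C8 * A := by positivity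
      linarith

lemma ceil_facts (y : ℝ) (hy : 1 ≤ y) :
    1 ≤ ⌈y⌉₊ ∧ y ≤ (⌈y⌉₊ : ℝ) ∧ (⌈y⌉₊ : ℝ) ≤ 2 * y := by
  have h1 := Nat.le_ceil y
  have h2 := Nat.ceil_lt_add_one (by linarith : 0 ≤ y)
  refine ⟨?_, h1, by linarith⟩
  have : (1 : ℝ) ≤ (⌈y⌉₊ : ℝ) := by linarith
  exact_mod_cast this

lemma low_range (F : ℝ → ℂ) (a : ℕ → ℂ) (N : ℝ → ℝ) (τ C D : ℝ) (hC : 0 ≤ C) (hD : 0 ≤ D)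
    (hN0 : ∀ t, 1 / 2 ≤ N t) (hN2 : ∀ t, N t ≤ 1 / 2 + |t + τ|)
    (happ : ∀ K : ℕ, 1 ≤ K → ∀ t : ℝ, N t ≤ 3 * K →
      ‖F t - ∑ n ∈ Finset.Ico 1 (K + 1), a n * cexp ((-(t * Real.log n) : ℝ) * I)‖
        ≤ C * (√(K : ℝ) / N t + (K : ℝ) ^ (-(1 / 4) : ℝ)))
    (h3 : ∀ K : ℕ, 1 ≤ K → ∑ n ∈ Finset.Ico 1 (K + 1), ‖a n‖ ≤ D * √(K : ℝ))
    (x : ℝ) (hx2 : 2 ≤ x) (hxτ : 2 * |τ| + 1 ≤ x) :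
    |∫ t in (2 : ℝ)..(x ^ 2), ‖F t‖ ^ 2| ≤ 2 * (D + 3 * C) ^ 2 * x ^ 4 := by
  obtain ⟨hK1, hK2, hK3⟩ := ceil_facts (x ^ 2) (by nlinarith)
  set K := ⌈x ^ 2⌉₊ with hK
  have hK1' : (1 : ℝ) ≤ K := by exact_mod_cast hK1
  have hpt : ∀ t ∈ Set.uIoc (2 : ℝ) (x ^ 2), ‖(‖F t‖ ^ 2 : ℝ)‖ ≤ 2 * (D + 3 * C) ^ 2 * x ^ 2 := by
    intro t ht
    rw [Set.uIoc_of_le (by nlinarith)] at ht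
    have hNt : N t ≤ 3 * K := by
      have h1 := hN2 t
      have h2 := abs_add_le t τ
      rw [abs_of_pos (by linarith [ht.1] : 0 < t)] at h2
      nlinarith [ht.2]
    have h4 := happ K hK1 t hNt
    have hs1 : 1 ≤ √(K : ℝ) := by rw [Real.one_le_sqrt]; exact hK1'
    have h5 : √(K : ℝ) / N t ≤ 2 * √(K : ℝ) := by
      rw [div_le_iff₀ (by linarith [hN0 t])]
      nlinarith [hN0 t]
    have h6 : (K : ℝ) ^ (-(1 / 4) : ℝ) ≤ 1 :=
      Real.rpow_le_one_of_one_le_of_nonpos hK1' (by norm_num)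
    have h7 : ‖∑ n ∈ Finset.Ico 1 (K + 1), a n * cexp ((-(t * Real.log n) : ℝ) * I)‖
        ≤ D * √(K : ℝ) := by
      refine (norm_sum_le _ _).trans (le_trans (le_of_eq ?_) (h3 K hK1))
      refine Finset.sum_congr rfl fun n _ => ?_
      rw [norm_mul, Complex.norm_exp_ofReal_mul_I, mul_one]
    have h8 : ‖F t‖ ≤ (D + 3 * C) * √(K : ℝ) := by
      have := norm_le_norm_add_norm_sub' (F t)
        (∑ n ∈ Finset.Ico 1 (K + 1), a n * cexp ((-(t * Real.log n) : ℝ) * I))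
      have h9 : C * (√(K : ℝ) / N t + (K : ℝ) ^ (-(1 / 4) : ℝ)) ≤ C * (3 * √(K : ℝ)) := by
        gcongr; linarith
      linarith
    rw [Real.norm_of_nonneg (by positivity)]
    calc ‖F t‖ ^ 2 ≤ ((D + 3 * C) * √(K : ℝ)) ^ 2 := by gcongr
      _ = (D + 3 * C) ^ 2 * K := by rw [mul_pow, Real.sq_sqrt (by positivity)]
      _ ≤ (D + 3 * C) ^ 2 * (2 * x ^ 2) := by gcongr
      _ = _ := by ring
  have h := intervalIntegral.norm_integral_le_of_norm_le_const hpt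
  rw [Real.norm_eq_abs, abs_of_nonneg (by nlinarith : 0 ≤ x ^ 2 - 2)] at h
  refine h.trans ?_
  calc _ ≤ 2 * (D + 3 * C) ^ 2 * x ^ 2 * x ^ 2 := by
        gcongr; linarith
    _ = _ := by ring

set_option maxHeartbeats 2000000 in
lemma high_range (F : ℝ → ℂ) (hF : Continuous F) (a : ℕ → ℂ) (N : ℝ → ℝ) (τ C D β B : ℝ)
    (hC : 0 ≤ C) (hD : 0 ≤ D) (hβ : 0 ≤ β) (hB : 0 ≤ B)
    (hN1 : ∀ t, |t + τ| ≤ N t) (hN2 : ∀ t, N t ≤ 1 / 2 + |t + τ|)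
    (happ : ∀ K : ℕ, 1 ≤ K → ∀ t : ℝ, N t ≤ 3 * K →
      ‖F t - ∑ n ∈ Finset.Ico 1 (K + 1), a n * cexp ((-(t * Real.log n) : ℝ) * I)‖
        ≤ C * (√(K : ℝ) / N t + (K : ℝ) ^ (-(1 / 4) : ℝ)))
    (h1 : ∀ K : ℕ, 1 ≤ K → |∑ n ∈ Finset.Ico 1 (K + 1), ‖a n‖ ^ 2 - β * Real.log K| ≤ B)
    (h2 : ∀ K : ℕ, 1 ≤ K → ∑ n ∈ Finset.Ico 1 (K + 1), (n : ℝ) * ‖a n‖ ^ 2 ≤ D ^ 2 * K)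
    (h3 : ∀ K : ℕ, 1 ≤ K → ∑ n ∈ Finset.Ico 1 (K + 1), ‖a n‖ ≤ D * √(K : ℝ)) :
    ∃ M : ℝ, ∀ x : ℝ, 2 ≤ x → 2 * |τ| + 1 ≤ x →
      |(∫ t in (x ^ 2)..(x ^ 4), ‖F t‖ ^ 2) - β * x ^ 4 * Real.log (x ^ 4)| ≤ M * x ^ 4 := by
  set R := (2 * π + 1) * D ^ 2 with hR
  have hR0 : 0 ≤ R := by positivity
  refine ⟨(4 * β + (B + β) + 2 * R) + 68 * C ^ 2 + (2 * R + (B + β) + 4 * β), fun x hx2 hxτ => ?_⟩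
  have hx0 : 0 < x := by linarith
  have hx4 : 1 ≤ x ^ 4 := one_le_pow₀ (by linarith)
  have hx24 : x ^ 2 ≤ x ^ 4 := pow_le_pow_right₀ (by linarith) (by norm_num)
  obtain ⟨hK1, hK2, hK3⟩ := ceil_facts (x ^ 4) hx4
  set K := ⌈x ^ 4⌉₊ with hK
  have hK1' : (1 : ℝ) ≤ K := by exact_mod_cast hK1
  set P : ℝ → ℂ := fun t => ∑ n ∈ Finset.Ico 1 (K + 1), a n * cexp ((-(t * Real.log n) : ℝ) * I)
    with hP
  have hPc : Continuous P := by
    rw [hP]; fun_prop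
  set S := ∑ n ∈ Finset.Ico 1 (K + 1), ‖a n‖ ^ 2 with hS
  set ℓ := Real.log (x ^ 4) with hℓ
  have hℓ0 : 0 ≤ ℓ := Real.log_nonneg hx4
  have hℓx : ℓ ≤ 4 * x := by
    rw [hℓ, Real.log_pow]
    have := Real.log_le_sub_one_of_pos hx0
    push_cast; linarith
  have hS1 : |S - β * ℓ| ≤ B + β := by
    have e : S - β * ℓ = (S - β * Real.log K) + β * (Real.log K - ℓ) := by ring
    rw [e]
    refine (abs_add_le _ _).trans (add_le_add (h1 K hK1) ?_)
    have hl1 : ℓ ≤ Real.log K := Real.log_le_log (by linarith) hK2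
    have hl2 : Real.log K ≤ Real.log 2 + ℓ := by
      rw [hℓ, ← Real.log_mul (by norm_num) (by positivity)]
      exact Real.log_le_log (by linarith) hK3
    have hl3 := Real.log_le_sub_one_of_pos (by norm_num : (0 : ℝ) < 2)
    rw [abs_of_nonneg (mul_nonneg hβ (by linarith))]
    nlinarith
  have hmv : |(∫ t in (x ^ 2)..(x ^ 4), ‖P t‖ ^ 2) - (x ^ 4 - x ^ 2) * S| ≤ 2 * R * x ^ 4 := by
    refine (mean_value (Finset.Ico 1 (K + 1)) (fun n hn => (Finset.mem_Ico.1 hn).1) a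
      (x ^ 2) (x ^ 4)).trans ?_
    have hh3 : (∑ n ∈ Finset.Ico 1 (K + 1), ‖a n‖) ^ 2 ≤ D ^ 2 * K := by
      calc _ ≤ (D * √(K : ℝ)) ^ 2 := by
            gcongr
            exact h3 K hK1
        _ = _ := by rw [mul_pow, Real.sq_sqrt (by positivity)]
    calc _ ≤ 2 * π * (D ^ 2 * K) + D ^ 2 * K := by
          gcongr
          exact h2 K hK1
      _ = R * K := by rw [hR]; ring
      _ ≤ R * (2 * x ^ 4) := by gcongr
      _ = _ := by ring
  have hSup : S ≤ 4 * β * x + (B + β) := by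
    have := (abs_le.1 hS1).2
    nlinarith
  have hPint : ∫ t in (x ^ 2)..(x ^ 4), ‖P t‖ ^ 2
      ≤ x * x ^ 4 * (4 * β + (B + β) + 2 * R) := by
    have h4 := (abs_le.1 hmv).2
    have h5 : (x ^ 4 - x ^ 2) * S ≤ x ^ 4 * (4 * β * x + (B + β)) := by
      apply mul_le_mul (by nlinarith) hSup (Finset.sum_nonneg fun _ _ => by positivity)
        (by positivity)
    have h6 : x ^ 4 * ((B + β) + 2 * R) * 1 ≤ x ^ 4 * ((B + β) + 2 * R) * x := by
      gcongr; linarith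
    nlinarith
  -- pointwise comparison
  set G : ℝ → ℝ := fun t => 2 * C ^ 2 * (16 * x ^ 4 * t ^ (-2 : ℤ) + x⁻¹ ^ 2) with hG
  have hE : ∀ t ∈ Set.Icc (x ^ 2) (x ^ 4), ‖F t - P t‖ ^ 2 ≤ G t := by
    intro t ht
    have ht0 : 0 < t := by nlinarith [ht.1]
    have htx : 2 * |τ| ≤ t := by nlinarith [ht.1]
    have hNt : N t ≤ 3 * K := by
      have h5 := hN2 t
      have h6 := abs_add_le t τ
      rw [abs_of_pos ht0] at h6
      nlinarith [ht.2]
    have hNl : t / 2 ≤ N t := by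
      have h5 := hN1 t
      have h6 := neg_abs_le τ
      have h7 := le_abs_self (t + τ)
      linarith
    have h4 := happ K hK1 t hNt
    have hsq : √(K : ℝ) ≤ 2 * x ^ 2 := by
      rw [Real.sqrt_le_left (by positivity)]
      nlinarith
    have h5 : √(K : ℝ) / N t ≤ 4 * x ^ 2 / t := by
      calc _ ≤ (2 * x ^ 2) / (t / 2) := by gcongr
        _ = _ := by field_simp; ring
    have h6 : (K : ℝ) ^ (-(1 / 4) : ℝ) ≤ x⁻¹ := by
      calc _ ≤ (x ^ 4) ^ (-(1 / 4) : ℝ) :=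
            Real.rpow_le_rpow_of_nonpos (by positivity) hK2 (by norm_num)
        _ = x⁻¹ := by
            rw [← Real.rpow_natCast, ← Real.rpow_mul hx0.le, ← Real.rpow_neg_one]
            norm_num
    have h7 : ‖F t - P t‖ ≤ C * (4 * x ^ 2 / t + x⁻¹) := by
      refine h4.trans ?_
      gcongr
    calc _ ≤ (C * (4 * x ^ 2 / t + x⁻¹)) ^ 2 := by gcongr
      _ ≤ C ^ 2 * (2 * ((4 * x ^ 2 / t) ^ 2 + x⁻¹ ^ 2)) := by
          rw [mul_pow]
          gcongr
          nlinarith [sq_nonneg (4 * x ^ 2 / t - x⁻¹)]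
      _ = G t := by
          simp only [hG]
          rw [zpow_neg, div_pow, div_eq_mul_inv]
          norm_cast
          ring
  have hcmp : ∀ t ∈ Set.Icc (x ^ 2) (x ^ 4),
      |‖F t‖ ^ 2 - ‖P t‖ ^ 2| ≤ x⁻¹ * ‖P t‖ ^ 2 + (x + 1) * G t := by
    intro t ht
    have h4 := hE t ht
    have h5 := abs_norm_sub_norm_le (F t) (P t)
    set f := ‖F t‖
    set p := ‖P t‖ with hp
    set e := ‖F t - P t‖
    have hp0 : 0 ≤ p := norm_nonneg _
    have he0 : 0 ≤ e := norm_nonneg _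
    have h6 : f ^ 2 - p ^ 2 = (f - p) ^ 2 + 2 * p * (f - p) := by ring
    have h7 : |f ^ 2 - p ^ 2| ≤ e ^ 2 + 2 * p * e := by
      rw [h6]
      refine (abs_add_le _ _).trans ?_
      rw [abs_of_nonneg (sq_nonneg _), abs_mul, abs_of_nonneg (by positivity : 0 ≤ 2 * p),
        ← sq_abs (f - p)]
      gcongr
    have h8 : 2 * p * e ≤ x⁻¹ * p ^ 2 + x * e ^ 2 := by
      have : x⁻¹ * p ^ 2 + x * e ^ 2 - 2 * p * e = x⁻¹ * (p - x * e) ^ 2 := by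
        field_simp; ring
      have h9 : 0 ≤ x⁻¹ * (p - x * e) ^ 2 := by positivity
      linarith
    have h9 : (x + 1) * e ^ 2 ≤ (x + 1) * G t := by gcongr
    linarith
  have h0 : (0 : ℝ) ∉ Set.uIcc (x ^ 2) (x ^ 4) := by
    rw [Set.uIcc_of_le hx24]
    intro h
    have : 0 < x ^ 2 := by positivity
    linarith [h.1]
  have hz : IntervalIntegrable (fun t : ℝ => t ^ (-2 : ℤ)) MeasureTheory.volume (x ^ 2) (x ^ 4) :=
    intervalIntegral.intervalIntegrable_zpow (Or.inr h0)
  have hGi : IntervalIntegrable G MeasureTheory.volume (x ^ 2) (x ^ 4) :=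
    ((hz.const_mul _).add intervalIntegrable_const).const_mul _
  have hGint : ∫ t in (x ^ 2)..(x ^ 4), G t ≤ 34 * C ^ 2 * x ^ 2 := by
    simp only [hG]
    rw [intervalIntegral.integral_const_mul, intervalIntegral.integral_add (hz.const_mul _)
      intervalIntegrable_const, intervalIntegral.integral_const_mul,
      integral_zpow (Or.inr ⟨by norm_num, h0⟩), intervalIntegral.integral_const]
    have e : 16 * x ^ 4 * (((x ^ 4) ^ (-2 + 1 : ℤ) - (x ^ 2) ^ (-2 + 1 : ℤ)) / (((-2 : ℤ) : ℝ) + 1))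
        + (x ^ 4 - x ^ 2) • x⁻¹ ^ 2 = 17 * x ^ 2 - 17 := by
      norm_num
      field_simp
      ring
    rw [e]
    nlinarith [sq_nonneg C]
  have hFi : IntervalIntegrable (fun t => ‖F t‖ ^ 2) MeasureTheory.volume (x ^ 2) (x ^ 4) :=
    (by fun_prop : Continuous (fun t => ‖F t‖ ^ 2)).intervalIntegrable _ _
  have hPi : IntervalIntegrable (fun t => ‖P t‖ ^ 2) MeasureTheory.volume (x ^ 2) (x ^ 4) :=
    (by fun_prop : Continuous (fun t => ‖P t‖ ^ 2)).intervalIntegrable _ _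
  have hdiff : |(∫ t in (x ^ 2)..(x ^ 4), ‖F t‖ ^ 2) - ∫ t in (x ^ 2)..(x ^ 4), ‖P t‖ ^ 2|
      ≤ (4 * β + (B + β) + 2 * R) * x ^ 4 + 68 * C ^ 2 * x ^ 4 := by
    rw [← intervalIntegral.integral_sub hFi hPi]
    refine (intervalIntegral.abs_integral_le_integral_abs hx24).trans ?_
    refine (intervalIntegral.integral_mono_on hx24 (hFi.sub hPi).abs
      ((hPi.const_mul x⁻¹).add (hGi.const_mul (x + 1))) hcmp).trans ?_
    rw [intervalIntegral.integral_add (hPi.const_mul _) (hGi.const_mul _),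
      intervalIntegral.integral_const_mul, intervalIntegral.integral_const_mul]
    refine add_le_add ?_ ?_
    · calc _ ≤ x⁻¹ * (x * x ^ 4 * (4 * β + (B + β) + 2 * R)) := by gcongr
        _ = _ := by field_simp
    · calc _ ≤ (x + 1) * (34 * C ^ 2 * x ^ 2) := by gcongr
        _ ≤ (2 * x ^ 2) * (34 * C ^ 2 * x ^ 2) := by
            gcongr; nlinarith
        _ = _ := by ring
  have hmain : |(x ^ 4 - x ^ 2) * S - β * x ^ 4 * ℓ| ≤ ((B + β) + 4 * β) * x ^ 4 := by
    have e : (x ^ 4 - x ^ 2) * S - β * x ^ 4 * ℓ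
        = (x ^ 4 - x ^ 2) * (S - β * ℓ) - x ^ 2 * (β * ℓ) := by ring
    rw [e]
    refine (abs_sub _ _).trans ?_
    rw [abs_mul, abs_of_nonneg (by linarith : 0 ≤ x ^ 4 - x ^ 2),
      abs_of_nonneg (by positivity : 0 ≤ x ^ 2 * (β * ℓ)), add_mul]
    refine add_le_add ?_ ?_
    · rw [mul_comm (B + β)]
      apply mul_le_mul _ hS1 (abs_nonneg _) (by positivity)
      have : 0 ≤ x ^ 2 := by positivity
      linarith
    · calc x ^ 2 * (β * ℓ) ≤ x ^ 2 * (β * (4 * x)) := by gcongr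
        _ = 4 * β * (x ^ 3) := by ring
        _ ≤ 4 * β * x ^ 4 := by
            gcongr
            · linarith
            · norm_num
  have hA := abs_le.1 hdiff
  have hB' := abs_le.1 hmv
  have hC' := abs_le.1 hmain
  rw [abs_le]
  constructor <;> linarith [hA.1, hA.2, hB'.1, hB'.2, hC'.1, hC'.2]

/-- Mean square of ζ₂ in t₁ on the line σ₁ + σ₂ = 3/2 (from Theorem 1.1). -/
theorem stmt16 (Z : ℂ → ℂ → ℂ)
    (hZa : AnalyticOnNhd ℂ (fun p : ℂ × ℂ => Z p.1 p.2) {p | ¬ zeta2Sing p})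
    (hZs : ∀ s₁ s₂ : ℂ, 1 < s₂.re → 2 < s₁.re + s₂.re →
      Z s₁ s₂ = ∑' m : ℕ, ((m : ℂ) + 1) ^ (-s₁)
        * ∑' n : ℕ, (((m : ℂ) + 1) + ((n : ℂ) + 1)) ^ (-s₂))
    (σ₁ : ℝ) (s₂ : ℂ) (h : σ₁ + s₂.re = 3/2)
    (hsing : ∀ t₁ : ℝ, 2 ≤ t₁ → ¬ zeta2Sing (((σ₁ : ℂ) + t₁ * Complex.I), s₂)) :
    (fun T : ℝ => (∫ t in (2:ℝ)..T, ‖Z ((σ₁ : ℂ) + t * Complex.I) s₂‖ ^ 2)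
        - (‖s₂ - 1‖ ^ 2)⁻¹ * T * Real.log T)
      =O[atTop] (fun T : ℝ => T) := by
  have hs2 : s₂ ≠ 1 := fun h1 => hsing 2 le_rfl (Or.inl h1)
  set F : ℝ → ℂ := fun t => Z ((σ₁ : ℂ) + t * Complex.I) s₂ with hFdef
  have hre : ∀ t : ℝ, ((σ₁ : ℂ) + t * Complex.I + s₂).re = 3 / 2 := by
    intro t; simp; linarith
  have hne2 : ∀ t : ℝ, (σ₁ : ℂ) + t * Complex.I + s₂ ≠ 2 := by
    intro t h'
    have := hre t
    rw [h'] at this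
    norm_num at this
  have hFz : ∀ t : ℝ, F t = zH ((σ₁ : ℂ) + t * Complex.I + s₂) s₂ := by
    intro t
    have := Z_eq Z hZa hZs ((σ₁ : ℂ) + t * Complex.I + s₂) s₂ hs2
      (by rw [hre]; norm_num) (hne2 t)
    rw [← this, add_sub_cancel_right]
  have hFc : Continuous F := by
    rw [continuous_iff_continuousAt]
    intro t
    have h1 := (hZa ((σ₁ : ℂ) + t * Complex.I, s₂)
      (not_sing hs2 (by rw [hre]; norm_num) (hne2 t))).continuousAt
    exact ContinuousAt.comp (f := fun t : ℝ => ((σ₁ : ℂ) + t * Complex.I, s₂)) h1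
      (by fun_prop)
  obtain ⟨C, hC0, hC⟩ := approx_F σ₁ s₂ h hs2
  set N : ℝ → ℝ := fun t => ‖(σ₁ : ℂ) + t * Complex.I + s₂ - 1‖ with hNdef
  have hre1 : ∀ t : ℝ, ((σ₁ : ℂ) + t * Complex.I + s₂ - 1).re = 1 / 2 := by
    intro t; rw [Complex.sub_re, hre]; norm_num
  have him1 : ∀ t : ℝ, ((σ₁ : ℂ) + t * Complex.I + s₂ - 1).im = t + s₂.im := by
    intro t; simp
  have hN0 : ∀ t, 1 / 2 ≤ N t := by
    intro t
    have := Complex.abs_re_le_norm ((σ₁ : ℂ) + t * Complex.I + s₂ - 1)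
    rw [hre1, abs_of_pos (by norm_num)] at this
    exact this
  have hN1 : ∀ t, |t + s₂.im| ≤ N t := by
    intro t
    have := Complex.abs_im_le_norm ((σ₁ : ℂ) + t * Complex.I + s₂ - 1)
    rwa [him1] at this
  have hN2 : ∀ t, N t ≤ 1 / 2 + |t + s₂.im| := by
    intro t
    have := Complex.norm_le_abs_re_add_abs_im ((σ₁ : ℂ) + t * Complex.I + s₂ - 1)
    rwa [him1, hre1, abs_of_pos (by norm_num : (0 : ℝ) < 1 / 2)] at this
  set a : ℕ → ℂ := fun n => cb s₂ n + cc σ₁ s₂ n with ha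
  have happ : ∀ K : ℕ, 1 ≤ K → ∀ t : ℝ, N t ≤ 3 * K →
      ‖F t - ∑ n ∈ Finset.Ico 1 (K + 1), a n * cexp ((-(t * Real.log n) : ℝ) * Complex.I)‖
        ≤ C * (√(K : ℝ) / N t + (K : ℝ) ^ (-(1 / 4) : ℝ)) := by
    intro K hK t ht
    rw [hFz]
    exact hC K hK t ht
  set β := ‖s₂ - 1‖⁻¹ with hβ
  have hβ0 : 0 ≤ β := by positivity
  have hz := zK_nonneg s₂
  have hc8 := C8_nonneg
  have hco := coeff_bounds a (cb s₂) (cc σ₁ s₂) β (zK s₂) hβ0 hz (fun _ => rfl)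
    (fun n hn => cb_norm s₂ n hn) (fun n hn => cc_norm σ₁ s₂ h hs2 n hn)
  set D := 2 * (β + zK s₂) with hD
  have hD0 : 0 ≤ D := by positivity
  have hh3 : ∀ K : ℕ, 1 ≤ K → ∑ n ∈ Finset.Ico 1 (K + 1), ‖a n‖ ≤ D * √(K : ℝ) := by
    intro K hK
    refine (hco K hK).2.2.trans (le_of_eq ?_)
    rw [hD]; ring
  have hh2 : ∀ K : ℕ, 1 ≤ K →
      ∑ n ∈ Finset.Ico 1 (K + 1), (n : ℝ) * ‖a n‖ ^ 2 ≤ D ^ 2 * K := by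
    intro K hK
    refine (hco K hK).2.1.trans ?_
    gcongr
    rw [hD]; linarith
  obtain ⟨M, hM⟩ := high_range F hFc a N s₂.im C D (β ^ 2)
    (β ^ 2 + (2 * β * zK s₂ + zK s₂ ^ 2) * C8) hC0 hD0 (by positivity) (by positivity)
    hN1 hN2 happ (fun K hK => (hco K hK).1) hh2 hh3
  refine IsBigO.of_bound (2 * (D + 3 * C) ^ 2 + M) ?_
  filter_upwards [eventually_ge_atTop ((2 + (2 * |s₂.im| + 1)) ^ 4)] with T hT
  set x := T ^ (1 / 4 : ℝ) with hx
  have hT0 : 0 ≤ T := le_trans (by positivity) hT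
  have hxT : x ^ 4 = T := by
    rw [hx, ← Real.rpow_natCast, ← Real.rpow_mul hT0]; norm_num
  have hxl : 2 + (2 * |s₂.im| + 1) ≤ x := by
    rw [← hxT] at hT
    exact le_of_pow_le_pow_left₀ (by norm_num) (by positivity) hT
  have habs : 0 ≤ |s₂.im| := abs_nonneg _
  have hhi := hM x (by linarith) (by linarith)
  have hlo := low_range F a N s₂.im C D hC0 hD0 hN0 hN2 happ hh3 x (by linarith) (by linarith)
  have hFi : ∀ u v : ℝ, IntervalIntegrable (fun t => ‖F t‖ ^ 2) MeasureTheory.volume u v :=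
    fun u v => (by fun_prop : Continuous (fun t => ‖F t‖ ^ 2)).intervalIntegrable _ _
  have hadd := intervalIntegral.integral_add_adjacent_intervals (hFi 2 (x ^ 2)) (hFi (x ^ 2) (x ^ 4))
  rw [Real.norm_eq_abs, Real.norm_of_nonneg hT0, ← inv_pow, ← hxT]
  change |(∫ t in (2:ℝ)..(x ^ 4), ‖F t‖ ^ 2) - β ^ 2 * x ^ 4 * Real.log (x ^ 4)| ≤ _
  rw [← hadd, add_sub_assoc, add_mul]
  exact (abs_add_le _ _).trans (add_le_add hlo hhi)
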